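/- arXiv:0803.4392 — 3 statements merged into one kernel-verified Lean document; each statement's English description precedes it below -/
import Mathlib

section
/- Let D ⊆ ℕ be a set of indices and φ : ℝ⁺ → ℝ⁺ a convex increasing function. If there exists f ∈ L^φ(𝕋) such that ℛ_D f(x) = ∞ on a set of positive Lebesgue measure, then there exists f̃ ∈ L^φ(𝕋) such that ℛ_D f̃(x) = ∞ for every x ∈ 𝕋. -/
open MeasureTheory Set

/-- The circle `𝕋 = ℝ/ℤ` with its Lebesgue (Haar) probability measure. -/
abbrev Circle1 := AddCircle (1 : ℝ)

/-- The Riemann sum operator `R_n f(x) = (1/n) ∑_{k=0}^{n-1} f(x + k/n)`. -/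
noncomputable def RiemannSum (n : ℕ) (f : Circle1 → ℝ) (x : Circle1) : ℝ :=
  (n : ℝ)⁻¹ * ∑ k ∈ Finset.range n, f (x + (((k : ℝ) / (n : ℝ) : ℝ) : Circle1))

/-- The Riemann maximal function `ℛ_D f(x) = sup_{n ∈ D} R_n|f|(x)` (valued in `[0,∞]`). -/
noncomputable def RMax (D : Set ℕ) (f : Circle1 → ℝ) (x : Circle1) : ENNReal :=
  ⨆ (n : ℕ) (_ : n ∈ D), ENNReal.ofReal (RiemannSum n (fun y => |f y|) x)

open Filter Topology

/-- The rational points of the circle. -/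
noncomputable def ratPt (q : ℚ) : Circle1 := ((q : ℝ) : Circle1)

lemma ratPt_add (p q : ℚ) : ratPt (p + q) = ratPt p + ratPt q := by
  simp [ratPt]

lemma ratPt_div (k n : ℕ) :
    (((k : ℝ) / (n : ℝ) : ℝ) : Circle1) = ratPt ((k : ℚ) / n) := by
  simp [ratPt]

/-- A function, finite everywhere, with `R_n gInv ≥ n`. -/
noncomputable def gInv (x : Circle1) : ℝ :=
  ((((AddCircle.equivIoc (1 : ℝ) 0 x : Ioc (0 : ℝ) (0 + 1)) : ℝ)) ^ 2)⁻¹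

lemma gInv_measurable : Measurable gInv := by
  have h : Measurable (AddCircle.equivIoc (1 : ℝ) 0) :=
    (AddCircle.measurableEquivIoc (1 : ℝ) 0).measurable
  unfold gInv
  exact ((measurable_subtype_coe.comp h).pow_const 2).inv

lemma gInv_nonneg (x : Circle1) : 0 ≤ gInv x := by
  unfold gInv; positivity

lemma le_RiemannSum_gInv (n : ℕ) (hn : 0 < n) (x : Circle1) :
    (n : ℝ) ≤ RiemannSum n (fun y => |gInv y|) x := by
  have hn' : (0 : ℝ) < n := by exact_mod_cast hn
  obtain ⟨r, ⟨hr0, hr1⟩, rfl⟩ := AddCircle.eq_coe_Ioc (p := (1 : ℝ)) x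
  have key : ∃ k ∈ Finset.range n, ∃ s : ℝ, 0 < s ∧ s ≤ 1 / n ∧
      (r : Circle1) + (((k : ℝ) / (n : ℝ) : ℝ) : Circle1) = (s : Circle1) := by
    have hc1 : 0 < ⌈(n : ℝ) * r⌉₊ := Nat.ceil_pos.2 (by positivity)
    have hc2 : ⌈(n : ℝ) * r⌉₊ ≤ n := Nat.ceil_le.2 (by nlinarith)
    have hc3 := Nat.le_ceil ((n : ℝ) * r)
    have hc4 := Nat.ceil_lt_add_one (a := (n : ℝ) * r) (by positivity)
    generalize ⌈(n : ℝ) * r⌉₊ = c at *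
    rcases Nat.lt_or_ge 1 c with h | h
    · refine ⟨n + 1 - c, Finset.mem_range.2 (by omega), r + (1 - c) / n, ?_, ?_, ?_⟩
      · have : r + (1 - (c : ℝ)) / n = (n * r + 1 - c) / n := by field_simp; ring
        rw [this]; apply div_pos _ hn'; linarith
      · have : r + (1 - (c : ℝ)) / n = (n * r + 1 - c) / n := by field_simp; ring
        rw [this]; gcongr; linarith
      · have : r + ((n + 1 - c : ℕ) : ℝ) / n = (r + (1 - c) / n) + 1 := by
          rw [Nat.cast_sub (by omega)]; push_cast; field_simp; ring
        rw [← AddCircle.coe_add, this, AddCircle.coe_add_period]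
    · have : c = 1 := by omega
      subst this
      refine ⟨0, Finset.mem_range.2 hn, r, hr0, ?_, by simp⟩
      rw [le_div_iff₀ hn']; push_cast at hc3; linarith
  obtain ⟨k, hk, s, hs0, hs1, hs⟩ := key
  have h1n : (1 : ℝ) / n ≤ 1 := by
    rw [div_le_one hn']; exact_mod_cast hn
  have hval : gInv (s : Circle1) = (s ^ 2)⁻¹ := by
    unfold gInv
    rw [AddCircle.equivIoc_coe_eq (p := (1 : ℝ)) (a := 0) (x := s) ⟨hs0, by linarith⟩]
  have hge : (n : ℝ) ^ 2 ≤ gInv (s : Circle1) := by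
    rw [hval, le_inv_comm₀ (by positivity) (by positivity)]
    calc s ^ 2 ≤ (1 / (n : ℝ)) ^ 2 := by gcongr
      _ = _ := by simp
  have hsum : (n : ℝ) ^ 2 ≤ ∑ k ∈ Finset.range n,
      |gInv ((r : Circle1) + (((k : ℝ) / (n : ℝ) : ℝ) : Circle1))| := by
    refine le_trans ?_ (Finset.single_le_sum (f := fun k : ℕ =>
      |gInv ((r : Circle1) + (((k : ℝ) / (n : ℝ) : ℝ) : Circle1))|) (fun i _ => abs_nonneg _) hk)
    rw [hs]
    exact hge.trans (le_abs_self _)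
  unfold RiemannSum
  calc (n : ℝ) = (n : ℝ)⁻¹ * (n : ℝ) ^ 2 := by field_simp
    _ ≤ _ := by gcongr

lemma RMax_eq_top_iff (D : Set ℕ) (f : Circle1 → ℝ) (x : Circle1) :
    RMax D f x = ⊤ ↔ ∀ C : ℝ, ∃ n ∈ D, C < RiemannSum n (fun y => |f y|) x := by
  unfold RMax
  constructor
  · intro h C
    by_contra! hC
    have : (⨆ (n : ℕ) (_ : n ∈ D), ENNReal.ofReal (RiemannSum n (fun y => |f y|) x))
        ≤ ENNReal.ofReal C := iSup₂_le fun n hn => ENNReal.ofReal_le_ofReal (hC n hn)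
    rw [h] at this
    exact ENNReal.ofReal_ne_top (top_le_iff.1 this)
  · intro h
    refine ENNReal.eq_top_of_forall_nnreal_le fun r => ?_
    obtain ⟨n, hn, hr⟩ := h r
    refine le_trans ?_ (le_iSup₂ (f := fun (n : ℕ) (_ : n ∈ D) =>
      ENNReal.ofReal (RiemannSum n (fun y => |f y|) x)) n hn)
    rw [← ENNReal.ofReal_coe_nnreal]
    exact ENNReal.ofReal_le_ofReal hr.le

lemma RMax_measurable (D : Set ℕ) (f : Circle1 → ℝ) (hf : Measurable f) :
    Measurable (RMax D f) := by
  unfold RMax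
  refine Measurable.iSup fun n => Measurable.iSup fun _ => ENNReal.measurable_ofReal.comp ?_
  unfold RiemannSum
  refine Measurable.const_mul (Finset.measurable_sum _ fun k _ => ?_) _
  exact (hf.comp (measurable_id.add_const _)).abs

lemma infinite_of_RMax (D : Set ℕ) (f : Circle1 → ℝ) (x : Circle1) (h : RMax D f x = ⊤) :
    D.Infinite := by
  intro hfin
  rw [RMax_eq_top_iff] at h
  obtain ⟨C, hC⟩ := (hfin.image (fun n => RiemannSum n (fun y => |f y|) x)).bddAbove
  obtain ⟨n, hn, hlt⟩ := h C
  exact absurd (hC (mem_image_of_mem _ hn)) (not_le.2 hlt)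

lemma ae_exists_rat (E : Set Circle1) (hE : MeasurableSet E) (hpos : 0 < volume E) :
    ∀ᵐ x : Circle1, ∃ q : ℚ, x + ratPt q ∈ E := by
  let S : Set Circle1 := ⋃ q : ℚ, (fun x => x + ratPt q) ⁻¹' E
  have hS : MeasurableSet S :=
    MeasurableSet.iUnion fun q => (measurable_id.add_const _) hE
  have hdense : Dense {g : Circle1 | (g +ᵥ ·) ⁻¹' S = S} := by
    have hd : DenseRange ratPt :=
      (QuotientAddGroup.mk_surjective.denseRange).comp
        (Rat.denseRange_cast (𝕜 := ℝ)) (AddCircle.continuous_mk' (1 : ℝ))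
    refine Dense.mono ?_ hd
    rintro _ ⟨p, rfl⟩
    ext x
    simp only [S, mem_preimage, mem_iUnion, vadd_eq_add]
    constructor
    · rintro ⟨q, hq⟩
      refine ⟨p + q, ?_⟩
      rw [ratPt_add]; convert hq using 1; abel
    · rintro ⟨q, hq⟩
      refine ⟨q - p, ?_⟩
      convert hq using 1
      have : ratPt q = ratPt (q - p) + ratPt p := by rw [← ratPt_add]; simp
      rw [this]; abel
  have hconst := aeconst_of_dense_setOfPred_preimage_vadd_eq (μ := (volume : Measure Circle1))
    hS.nullMeasurableSet hdense
  have hES : E ⊆ S := fun x hx => mem_iUnion.2 ⟨0, by simpa [ratPt] using hx⟩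
  rw [Filter.eventuallyConst_set] at hconst
  rcases hconst with h | h
  · filter_upwards [h] with x hx
    simpa [S] using hx
  · exfalso
    have : volume S = 0 := measure_eq_zero_iff_ae_notMem.2 h
    exact hpos.ne' (measure_mono_null hES this)

lemma exists_max_of_tendsto (u : ℕ → ℝ) (h0 : ∀ j, 0 ≤ u j) (hu : Tendsto u atTop (𝓝 0)) :
    ∃ j, ∀ i, u i ≤ u j := by
  by_cases h : ∃ j0, 0 < u j0
  · obtain ⟨j0, hj0⟩ := h
    have hfin : {j | u j0 ≤ u j}.Finite := by
      have := hu.eventually (gt_mem_nhds hj0)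
      rw [← Nat.cofinite_eq_atTop, eventually_cofinite] at this
      simpa using this
    obtain ⟨j, hj, hmax⟩ := Set.exists_max_image _ u hfin ⟨j0, le_refl (u j0)⟩
    refine ⟨j, fun i => ?_⟩
    by_cases hi : u j0 ≤ u i
    · exact hmax i hi
    · exact (not_le.1 hi).le.trans hj
  · push Not at h
    exact ⟨0, fun i => (h i).trans (h0 0)⟩

lemma exists_small (f : Circle1 → ℝ) (hf : Measurable f) (j : ℕ) :
    ∃ a : ℝ, 0 < a ∧ a ≤ (1 / 2) ^ j ∧
      volume {x | (1 / 2 : ℝ) ^ j < a * |f x|} ≤ (1 / 2 : ENNReal) ^ j := by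
  let s : ℕ → Set Circle1 := fun M => {x | (M : ℝ) < |f x|}
  have hs : ∀ M, MeasurableSet (s M) := fun M => measurableSet_lt measurable_const hf.abs
  have hanti : Antitone s := fun M N h x (hx : (N : ℝ) < |f x|) =>
    lt_of_le_of_lt (by exact_mod_cast h) hx
  have ht := tendsto_measure_iInter_atTop (μ := (volume : Measure Circle1))
    (fun i => (hs i).nullMeasurableSet) hanti ⟨0, measure_ne_top _ _⟩
  have hempty : (⋂ n, s n) = ∅ := by
    ext x
    simp only [mem_iInter, mem_empty_iff_false, iff_false, not_forall]
    obtain ⟨n, hn⟩ := exists_nat_ge |f x|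
    exact ⟨n, not_lt.2 hn⟩
  rw [hempty, measure_empty] at ht
  have hev := ht.eventually (gt_mem_nhds (show (0 : ENNReal) < (1 / 2) ^ j from
    ENNReal.pow_pos (by simp) _))
  obtain ⟨M, hM⟩ := hev.exists
  refine ⟨(1 / 2) ^ j / (M + 1), by positivity, div_le_self (by positivity) (by
    have : (0 : ℝ) ≤ M := by positivity
    linarith), le_trans (measure_mono ?_) hM.le⟩
  intro x hx
  have hx' : (1 / 2 : ℝ) ^ j < (1 / 2) ^ j / (M + 1) * |f x| := hx
  have hp : (0 : ℝ) < (1 / 2) ^ j := by positivity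
  rw [div_mul_eq_mul_div, lt_div_iff₀ (by positivity)] at hx'
  have := lt_of_mul_lt_mul_left hx' hp.le
  show (M : ℝ) < |f x|
  linarith

/-- **From a.e. divergence to everywhere divergence (Lemma 8).** If for some `f ∈ L^φ`
the maximal function `ℛ_D f` is infinite on a set of positive measure, then there is
`f̃ ∈ L^φ` with `ℛ_D f̃ ≡ ∞` everywhere. -/
theorem exists_Lphi_RMax_eq_top_everywhere
    (D : Set ℕ) (φ : ℝ → ℝ)
    (hφmono : MonotoneOn φ (Set.Ici 0)) (hφconv : ConvexOn ℝ (Set.Ici 0) φ)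
    (hφpos : ∀ x ≥ (0:ℝ), 0 ≤ φ x)
    (f : Circle1 → ℝ) (hfmeas : Measurable f)
    (hfφ : (∫⁻ x, ENNReal.ofReal (φ |f x|)) < ⊤)
    (hdiv : 0 < volume {x : Circle1 | RMax D f x = ⊤}) :
    ∃ ftil : Circle1 → ℝ, Measurable ftil ∧
      (∫⁻ x, ENNReal.ofReal (φ |ftil x|)) < ⊤ ∧
      ∀ x : Circle1, RMax D ftil x = ⊤ := by
  classical
  have hDinf : D.Infinite := by
    obtain ⟨x, hx⟩ := nonempty_of_measure_ne_zero hdiv.ne'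
    exact infinite_of_RMax D f x hx
  have hEmeas : MeasurableSet {x : Circle1 | RMax D f x = ⊤} :=
    RMax_measurable D f hfmeas (measurableSet_singleton ⊤)
  have hE := ae_exists_rat _ hEmeas hdiv
  obtain ⟨q, hq⟩ := exists_surjective_nat ℚ
  choose a ha0 ha1 ha2 using exists_small f hfmeas
  -- the translated and rescaled functions
  let u : ℕ → Circle1 → ℝ := fun j x => a j * |f (x + ratPt (q j))|
  have hu0 : ∀ j x, 0 ≤ u j x := fun j x => mul_nonneg (ha0 j).le (abs_nonneg _)
  have hum : ∀ j, Measurable (u j) := fun j =>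
    ((hfmeas.comp (measurable_id.add_const _)).abs).const_mul _
  have hBC : ∀ᵐ x : Circle1, ∀ᶠ j in atTop, x ∉ {x | (1 / 2 : ℝ) ^ j < u j x} := by
    refine ae_eventually_notMem (ne_top_of_le_ne_top (b := ∑' j : ℕ, (1 / 2 : ENNReal) ^ j)
      ?_ (ENNReal.tsum_le_tsum fun j => ?_))
    · rw [ENNReal.tsum_geometric]
      simp
    · have := measure_preimage_add_right (volume : Measure Circle1) (ratPt (q j))
        {x | (1 / 2 : ℝ) ^ j < a j * |f x|}
      exact (le_of_eq this).trans (ha2 j)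
  have hlim : ∀ᵐ x : Circle1, Tendsto (fun j => u j x) atTop (𝓝 0) := by
    filter_upwards [hBC] with x hx
    refine tendsto_of_tendsto_of_tendsto_of_le_of_le' tendsto_const_nhds
      (tendsto_pow_atTop_nhds_zero_of_lt_one (r := (1 / 2 : ℝ)) (by norm_num) (by norm_num))
      (Eventually.of_forall fun j => hu0 j x) ?_
    filter_upwards [hx] with j hj
    exact not_lt.1 hj
  -- an invariant Borel null set
  let N0 : Set Circle1 := toMeasurable volume
    {x | ¬ ((∃ q : ℚ, x + ratPt q ∈ {x : Circle1 | RMax D f x = ⊤}) ∧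
      Tendsto (fun j => u j x) atTop (𝓝 0))}
  have hN0 : volume N0 = 0 := by
    rw [measure_toMeasurable]
    exact hE.and hlim
  let N : Set Circle1 := ⋃ p : ℚ, (fun x => x + ratPt p) ⁻¹' N0
  have hNm : MeasurableSet N := MeasurableSet.iUnion fun p =>
    (measurable_id.add_const _) (measurableSet_toMeasurable _ _)
  have hN : volume N = 0 := by
    refine measure_iUnion_null fun p => ?_
    rw [measure_preimage_add_right, hN0]
  have hNinv : ∀ (x : Circle1) (p : ℚ), x + ratPt p ∈ N ↔ x ∈ N := by
    intro x p
    simp only [N, mem_iUnion, mem_preimage]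
    constructor
    · rintro ⟨r, hr⟩
      refine ⟨p + r, ?_⟩
      rwa [ratPt_add, ← add_assoc]
    · rintro ⟨r, hr⟩
      refine ⟨r - p, ?_⟩
      rwa [add_assoc, ← ratPt_add, add_sub_cancel]
  have hgood : ∀ x, x ∉ N → (∃ q : ℚ, RMax D f (x + ratPt q) = ⊤) ∧
      Tendsto (fun j => u j x) atTop (𝓝 0) := by
    intro x hx
    by_contra hcon
    refine hx (mem_iUnion.2 ⟨0, ?_⟩)
    have : x + ratPt 0 = x := by simp [ratPt]
    show x + ratPt 0 ∈ N0
    rw [this]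
    exact subset_toMeasurable _ _ hcon
  let F : Circle1 → ℝ := fun x => if x ∈ N then gInv x else ⨆ j, u j x
  have hFmax : ∀ x, x ∉ N → ∃ j, F x = u j x ∧ ∀ i, u i x ≤ F x := by
    intro x hx
    obtain ⟨j, hj⟩ := exists_max_of_tendsto (fun j => u j x) (fun j => hu0 j x) (hgood x hx).2
    have hFx : F x = u j x := by
      simp only [F, if_neg hx]
      exact le_antisymm (ciSup_le hj) (le_ciSup (f := fun j => u j x) ⟨u j x, by
        rintro _ ⟨i, rfl⟩; exact hj i⟩ j)
    exact ⟨j, hFx, fun i => hFx ▸ hj i⟩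
  refine ⟨F, Measurable.ite hNm gInv_measurable (Measurable.iSup hum), ?_, ?_⟩
  · -- integrability
    have hbound : ∀ᵐ x : Circle1, ENNReal.ofReal (φ |F x|) ≤ ENNReal.ofReal (φ 0) +
        ∑' j, ENNReal.ofReal (a j) * ENNReal.ofReal (φ |f (x + ratPt (q j))|) := by
      filter_upwards [measure_eq_zero_iff_ae_notMem.1 hN] with x hx
      obtain ⟨j, hj, -⟩ := hFmax x hx
      have haj : a j ≤ 1 := (ha1 j).trans (pow_le_one₀ (by norm_num) (by norm_num))
      have hφ0 := hφpos 0 le_rfl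
      have hc := hφconv.2 (x := |f (x + ratPt (q j))|) (y := 0) (Set.mem_Ici.2 (abs_nonneg _))
        (Set.mem_Ici.2 le_rfl) (ha0 j).le (sub_nonneg.2 haj) (by ring)
      simp only [smul_eq_mul, mul_zero, add_zero] at hc
      have h1 : φ |F x| ≤ φ 0 + a j * φ |f (x + ratPt (q j))| := by
        rw [hj, abs_of_nonneg (hu0 j x)]
        refine hc.trans ?_
        nlinarith [ha0 j]
      calc ENNReal.ofReal (φ |F x|)
          ≤ ENNReal.ofReal (φ 0 + a j * φ |f (x + ratPt (q j))|) := ENNReal.ofReal_le_ofReal h1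
        _ = ENNReal.ofReal (φ 0) +
            ENNReal.ofReal (a j) * ENNReal.ofReal (φ |f (x + ratPt (q j))|) := by
          rw [ENNReal.ofReal_add hφ0 (mul_nonneg (ha0 j).le (hφpos _ (abs_nonneg _))),
            ENNReal.ofReal_mul (ha0 j).le]
        _ ≤ _ := by
          gcongr
          exact ENNReal.le_tsum (f := fun j =>
            ENNReal.ofReal (a j) * ENNReal.ofReal (φ |f (x + ratPt (q j))|)) j
    have hφm : Measurable fun x : Circle1 => ENNReal.ofReal (φ |f x|) := by
      have hm : Monotone fun t : ℝ => φ (max t 0) := fun s t hst =>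
        hφmono (Set.mem_Ici.2 (le_max_right _ _)) (Set.mem_Ici.2 (le_max_right _ _)) (max_le_max_right 0 hst)
      have := ENNReal.measurable_ofReal.comp (hm.measurable.comp hfmeas.abs)
      convert this using 2 with x
      simp
    have hφj : ∀ j, Measurable fun x : Circle1 => ENNReal.ofReal (φ |f (x + ratPt (q j))|) :=
      fun j => hφm.comp (measurable_id.add_const (ratPt (q j)))
    refine lt_of_le_of_lt (lintegral_mono_ae hbound) ?_
    rw [lintegral_add_left measurable_const, lintegral_tsum (fun j =>
      ((hφj j).const_mul _).aemeasurable)]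
    have hint : ∀ j, ∫⁻ x : Circle1, ENNReal.ofReal (a j) *
        ENNReal.ofReal (φ |f (x + ratPt (q j))|) =
        ENNReal.ofReal (a j) * ∫⁻ x, ENNReal.ofReal (φ |f x|) := by
      intro j
      rw [lintegral_const_mul _ (hφj j),
        lintegral_add_right_eq_self (fun x : Circle1 => ENNReal.ofReal (φ |f x|))]
    simp_rw [hint]
    rw [ENNReal.tsum_mul_right, ENNReal.add_lt_top]
    constructor
    · simp
    · refine ENNReal.mul_lt_top (lt_of_le_of_lt (b := ∑' j : ℕ, (1 / 2 : ENNReal) ^ j)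
        (ENNReal.tsum_le_tsum fun j => ?_) ?_) hfφ
      · refine (ENNReal.ofReal_le_ofReal (ha1 j)).trans (le_of_eq ?_)
        rw [ENNReal.ofReal_pow (by norm_num), ENNReal.ofReal_div_of_pos (by norm_num)]
        simp
      · rw [ENNReal.tsum_geometric]
        simp
  · -- divergence
    intro x
    rw [RMax_eq_top_iff]
    intro C
    by_cases hx : x ∈ N
    · obtain ⟨n, hn, hlt⟩ := hDinf.exists_gt ⌈C⌉₊
      refine ⟨n, hn, ?_⟩
      have h1 : C < n := lt_of_le_of_lt (Nat.le_ceil C) (by exact_mod_cast hlt)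
      refine h1.trans_le ((le_RiemannSum_gInv n (by omega) x).trans (le_of_eq ?_))
      unfold RiemannSum
      congr 1
      refine Finset.sum_congr rfl fun k _ => ?_
      rw [ratPt_div]
      simp only [F, if_pos ((hNinv x _).2 hx)]
    · obtain ⟨⟨p, hp⟩, -⟩ := hgood x hx
      obtain ⟨j, rfl⟩ := hq p
      rw [RMax_eq_top_iff] at hp
      obtain ⟨n, hn, hlt⟩ := hp (C / a j)
      refine ⟨n, hn, ?_⟩
      rw [div_lt_iff₀ (ha0 j)] at hlt
      refine hlt.trans_le ?_
      unfold RiemannSum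
      rw [mul_assoc, Finset.sum_mul]
      gcongr with k hk
      rw [ratPt_div]
      obtain ⟨-, -, hi⟩ := hFmax _ (fun h => hx ((hNinv x ((k : ℚ) / n)).1 h))
      refine le_trans (le_of_eq ?_) ((hi j).trans (le_abs_self _))
      simp only [u]
      rw [mul_comm, add_right_comm]
end

section
/- Let (T_n) be a sequence of linear operators from L¹(𝕋) (with Lebesgue probability measure) to measurable functions on 𝕋 that are translation invariant, i.e. T_n f_x(t) = T_n f(x+t) where f_x(t) = f(x+t), and satisfy: (1) f ≥ 0 implies T_n f ≥ 0; (2) T_n 𝟙_𝕋 = 1; and (3) for every ε > 0 there exists δ > 0 such that |E| < δ implies |{x : T_n 𝟙_E(x) > ε}| < ε for all n. If (T_n) is weak δ-sweeping out for every 0 < δ < 1, then (T_n) is strong sweeping out. -/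
open MeasureTheory Filter Set

namespace SweepOut

lemma limsup_eq_one (u : ℕ → ℝ) (h0 : ∀ n, 0 ≤ u n) (h1 : ∀ n, u n ≤ 1)
    (h : ∀ ε : ℝ, 0 < ε → ∀ N, ∃ n, N ≤ n ∧ 1 - ε < u n) : limsup u atTop = 1 := by
  have hb : IsBoundedUnder (· ≤ ·) atTop u := isBoundedUnder_of ⟨1, h1⟩
  have hb' : IsBoundedUnder (· ≥ ·) atTop u := isBoundedUnder_of ⟨0, h0⟩
  apply le_antisymm
  · exact limsup_le_of_le hb'.isCoboundedUnder_le (Eventually.of_forall h1)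
  · apply le_of_forall_pos_sub_le
    intro ε hε
    apply le_limsup_of_frequently_le _ hb
    rw [frequently_atTop]
    intro N
    obtain ⟨n, hn, h⟩ := h ε hε N
    exact ⟨n, hn, h.le⟩

lemma liminf_eq_zero (u : ℕ → ℝ) (h0 : ∀ n, 0 ≤ u n) (h1 : ∀ n, u n ≤ 1)
    (h : ∀ ε : ℝ, 0 < ε → ∀ N, ∃ n, N ≤ n ∧ u n < ε) : liminf u atTop = 0 := by
  have hb : IsBoundedUnder (· ≤ ·) atTop u := isBoundedUnder_of ⟨1, h1⟩
  have hb' : IsBoundedUnder (· ≥ ·) atTop u := isBoundedUnder_of ⟨0, h0⟩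
  apply le_antisymm
  · apply le_of_forall_pos_le_add
    intro ε hε
    apply liminf_le_of_frequently_le _ hb'
    rw [frequently_atTop]
    intro N
    obtain ⟨n, hn, h⟩ := h ε hε N
    exact ⟨n, hn, by linarith⟩
  · exact le_liminf_of_le hb.isCoboundedUnder_ge (Eventually.of_forall h0)

section
variable {C : Type*} [AddCommGroup C] [MeasurableSpace C] [MeasurableAdd₂ C]
  (μ : Measure C) [IsProbabilityMeasure μ] [μ.IsAddLeftInvariant]

lemma exists_translate (A H : Set C) (hA : MeasurableSet A) (hH : MeasurableSet H) :
    ∃ x : C, μ.real (A ∩ (fun t => x + t) ⁻¹' H) ≤ μ.real A * μ.real H := by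
  let S : Set (C × C) := {p | p.2 ∈ A ∧ p.1 + p.2 ∈ H}
  have hS : MeasurableSet S :=
    (measurable_snd hA).inter ((measurable_fst.add measurable_snd) hH)
  have e1 := Measure.prod_apply (μ := μ) (ν := μ) hS
  have e2 := Measure.prod_apply_symm (μ := μ) (ν := μ) hS
  have e3 : ∀ y, μ ((fun x => (x, y)) ⁻¹' S) = A.indicator (fun _ => μ H) y := by
    intro y
    by_cases hy : y ∈ A
    · rw [indicator_of_mem hy, ← measure_preimage_add μ y H]
      congr 1
      ext x
      simp [S, hy, add_comm]
    · rw [indicator_of_notMem hy]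
      have : (fun x => (x, y)) ⁻¹' S = ∅ := by
        ext x; simp [S, hy]
      rw [this, measure_empty]
  simp_rw [e3] at e2
  rw [lintegral_indicator_const hA] at e2
  obtain ⟨x, hx⟩ := exists_le_lintegral (μ := μ)
    (measurable_measure_prodMk_left (ν := μ) hS).aemeasurable
  rw [← e1, e2] at hx
  refine ⟨x, ?_⟩
  have := ENNReal.toReal_mono (by finiteness) hx
  rw [ENNReal.toReal_mul, mul_comm] at this
  exact this

variable (P : ℕ → Set C → C → ℝ)
  (hP0 : ∀ n E x, MeasurableSet E → 0 ≤ P n E x)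
  (hsub : ∀ n E F G x, MeasurableSet E → MeasurableSet F → MeasurableSet G →
    E ⊆ F ∪ G → P n E x ≤ P n F x + P n G x)
  (hmono : ∀ n E F x, MeasurableSet E → MeasurableSet F → E ⊆ F → P n E x ≤ P n F x)
  (hcompl : ∀ n E x, MeasurableSet E → P n E x + P n Eᶜ x = 1)
  (hmeas : ∀ n E, MeasurableSet E → Measurable (P n E))
  (htr : ∀ n E x t, MeasurableSet E → P n ((fun t => x + t) ⁻¹' E) t = P n E (x + t))
  (habs : ∀ ε : ℝ, 0 < ε → ∃ δ : ℝ, 0 < δ ∧ ∀ E, MeasurableSet E → μ.real E < δ →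
    ∀ n, μ.real {x | ε < P n E x} ≤ ε)
  (hweak : ∀ c : ℝ, 0 < c → c < 1 → ∀ r : ℝ, 0 < r → ∃ E, MeasurableSet E ∧
    r * μ.real E < μ.real {x | ∃ n, c < P n E x})

include habs in
lemma abs_fin (ε : ℝ) (hε : 0 < ε) (N : ℕ) : ∃ δ : ℝ, 0 < δ ∧ ∀ E, MeasurableSet E →
    μ.real E < δ → μ.real {x | ∃ n < N, ε < P n E x} ≤ ε := by
  have hN : (0:ℝ) < N + 1 := by positivity
  obtain ⟨δ, hδ, h⟩ := habs (ε / (N + 1)) (by positivity)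
  refine ⟨δ, hδ, fun E hE hEδ => ?_⟩
  have hle : ε / (N + 1) ≤ ε := div_le_self hε.le (by linarith [Nat.cast_nonneg (α := ℝ) N])
  calc μ.real {x | ∃ n < N, ε < P n E x}
      ≤ μ.real (⋃ n ∈ Finset.range N, {x | ε / (N + 1) < P n E x}) := by
        apply measureReal_mono _ (measure_ne_top _ _)
        rintro x ⟨n, hn, hx⟩
        simp only [mem_iUnion, Finset.mem_range]
        exact ⟨n, hn, lt_of_le_of_lt hle hx⟩
    _ ≤ ∑ n ∈ Finset.range N, μ.real {x | ε / (N + 1) < P n E x} :=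
        measureReal_biUnion_finset_le _ _
    _ ≤ ∑ n ∈ Finset.range N, ε / (N + 1) := Finset.sum_le_sum fun n _ => h E hE hEδ n
    _ = N * (ε / (N + 1)) := by simp
    _ ≤ ε := by
        rw [mul_div_assoc', div_le_iff₀ hN]
        nlinarith

include hmono hmeas htr in
lemma greedy (c : ℝ) (E : Set C) (hE : MeasurableSet E) (k : ℕ) :
    ∃ F, MeasurableSet F ∧ μ.real F ≤ k * μ.real E ∧
      μ.real {x | ¬ ∃ n, c < P n F x} ≤ (1 - μ.real {x | ∃ n, c < P n E x}) ^ k := by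
  have hm : ∀ F, MeasurableSet F → MeasurableSet {x | ∃ n, c < P n F x} := by
    intro F hF
    simp only [setOf_exists]
    exact MeasurableSet.iUnion fun n => measurableSet_lt measurable_const (hmeas n F hF)
  have hc : μ.real {x | ¬ ∃ n, c < P n E x} = 1 - μ.real {x | ∃ n, c < P n E x} :=
    probReal_compl_eq_one_sub (hm E hE)
  have hmc : ∀ F, MeasurableSet F → MeasurableSet {x | ¬ ∃ n, c < P n F x} :=
    fun F hF => (hm F hF).compl
  induction k with
  | zero => exact ⟨∅, MeasurableSet.empty, by simp, by simpa using measureReal_le_one⟩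
  | succ k ih =>
    obtain ⟨F, hF, h1, h2⟩ := ih
    obtain ⟨x, hx⟩ := exists_translate μ _ _ (hmc F hF) (hmc E hE)
    have hE' : MeasurableSet ((fun t => x + t) ⁻¹' E) := measurable_const_add x hE
    refine ⟨F ∪ (fun t => x + t) ⁻¹' E, hF.union hE', ?_, ?_⟩
    · refine (measureReal_union_le _ _).trans ?_
      have : μ.real ((fun t => x + t) ⁻¹' E) = μ.real E := by
        rw [measureReal_def, measure_preimage_add, measureReal_def]
      rw [this]
      push_cast
      linarith
    · refine (measureReal_mono ?_ (by finiteness)).trans (hx.trans ?_)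
      · intro t ht
        constructor
        · rintro ⟨n, hn⟩
          exact ht ⟨n, hn.trans_le (hmono n _ _ t hF (hF.union hE') subset_union_left)⟩
        · rintro ⟨n, hn⟩
          refine ht ⟨n, ?_⟩
          rw [← htr n E x t hE] at hn
          exact hn.trans_le (hmono n _ _ t hE' (hF.union hE') subset_union_right)
      · rw [hc, pow_succ]
        exact mul_le_mul_of_nonneg_right h2 (hc ▸ measureReal_nonneg)

include hmono hmeas htr hweak in
lemma step1 (ε η : ℝ) (hε : 0 < ε) (hε1 : ε < 1) (hη : 0 < η) :
    ∃ F, MeasurableSet F ∧ μ.real F < η ∧ μ.real {x | ¬ ∃ n, 1 - ε < P n F x} ≤ ε := by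
  let D : ℝ := - Real.log ε
  have hD : 0 < D := by simpa [D] using Real.log_neg hε hε1
  obtain ⟨E, hE, hlt⟩ := hweak (1 - ε) (by linarith) (by linarith) ((D + 1) / η) (by positivity)
  obtain ⟨F, hF, h1, h2⟩ := greedy μ P hmono hmeas htr (1 - ε) E hE
    ⌈D / μ.real {x | ∃ n, 1 - ε < P n E x}⌉₊
  set g := μ.real {x | ∃ n, 1 - ε < P n E x} with hg
  have hgpos : 0 < g := lt_of_le_of_lt (by positivity) hlt
  have hg1 : g ≤ 1 := measureReal_le_one
  have hk1 : D / g ≤ ⌈D / g⌉₊ := Nat.le_ceil _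
  have hk2 : (⌈D / g⌉₊ : ℝ) < D / g + 1 := Nat.ceil_lt_add_one (by positivity)
  generalize ⌈D / g⌉₊ = k at *
  have hk3 : k * g ≤ D + 1 := by
    have : k * g ≤ (D / g + 1) * g := by gcongr
    rw [add_mul, div_mul_cancel₀ _ hgpos.ne'] at this
    linarith
  have hk4 : D ≤ k * g := by rwa [div_le_iff₀ hgpos] at hk1
  have hkpos : (0:ℝ) < k := lt_of_lt_of_le (by positivity) hk1
  refine ⟨F, hF, lt_of_le_of_lt h1 ?_, h2.trans ?_⟩
  · have h3 : (D + 1) * μ.real E < g * η := by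
      rw [div_mul_eq_mul_div, div_lt_iff₀ hη] at hlt
      exact hlt
    have h4 : (D + 1) * (k * μ.real E) < (D + 1) * η := by
      calc (D + 1) * (k * μ.real E) = k * ((D + 1) * μ.real E) := by ring
        _ < k * (g * η) := by gcongr
        _ = (k * g) * η := by ring
        _ ≤ (D + 1) * η := by gcongr
    exact lt_of_mul_lt_mul_left h4 (by positivity)
  · calc (1 - g) ^ k ≤ (Real.exp (-g)) ^ k :=
          pow_le_pow_left₀ (by linarith) (Real.one_sub_le_exp_neg g) k
      _ = Real.exp (-(k * g)) := by rw [← Real.exp_nat_mul]; ring_nf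
      _ ≤ Real.exp (-D) := by gcongr
      _ = ε := by simp [D, Real.exp_log hε]

include hmono hmeas htr hweak habs in
lemma step2 (ε η : ℝ) (hε : 0 < ε) (hε1 : ε ≤ 1) (hη : 0 < η) (N : ℕ) :
    ∃ F M, MeasurableSet F ∧ N < M ∧ μ.real F < η ∧
      μ.real {x | ¬ ∃ n, N ≤ n ∧ n < M ∧ 1 - ε < P n F x} ≤ ε := by
  obtain ⟨δ, hδ, hδ'⟩ := abs_fin μ P habs (ε / 3) (by positivity) N
  obtain ⟨F, hF, h1, h2⟩ := step1 μ P hmono hmeas htr hweak (ε / 3) (min η δ) (by positivity)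
    (by linarith) (by positivity)
  have h3 := hδ' F hF (h1.trans_le (min_le_right _ _))
  let S : ℕ → Set C := fun M => {x | ¬ ∃ n, N ≤ n ∧ n < M ∧ 1 - ε < P n F x}
  have hSm : ∀ M, MeasurableSet (S M) := by
    intro M
    apply MeasurableSet.compl (s := {x | ∃ n, N ≤ n ∧ n < M ∧ 1 - ε < P n F x})
    simp only [setOf_exists, setOf_and]
    exact MeasurableSet.iUnion fun n => (MeasurableSet.const _).inter
      ((MeasurableSet.const _).inter (measurableSet_lt measurable_const (hmeas n F hF)))
  have hanti : Antitone S := by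
    intro M M' hMM x hx
    rintro ⟨n, a, b, c⟩
    exact hx ⟨n, a, b.trans_le hMM, c⟩
  have hsubs : (⋂ M, S M) ⊆
      {x | ¬ ∃ n, 1 - ε / 3 < P n F x} ∪ {x | ∃ n < N, ε / 3 < P n F x} := by
    intro x hx
    by_contra hcon
    simp only [mem_union, mem_setOf_eq, not_or, not_not] at hcon
    obtain ⟨⟨n, hn⟩, hb⟩ := hcon
    have hNn : N ≤ n := by
      by_contra hlt
      exact hb ⟨n, by omega, by linarith⟩
    exact mem_iInter.1 hx (n + 1) ⟨n, hNn, by omega, by linarith⟩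
  have hlim := tendsto_measure_iInter_atTop (μ := μ) (fun i => (hSm i).nullMeasurableSet) hanti
    ⟨0, by finiteness⟩
  have hlt : μ (⋂ M, S M) < ENNReal.ofReal ε := by
    rw [← ENNReal.ofReal_toReal (measure_ne_top μ (⋂ M, S M)), ENNReal.ofReal_lt_ofReal_iff hε]
    have := (measureReal_mono hsubs (by finiteness)).trans (measureReal_union_le (μ := μ) _ _)
    change μ.real (⋂ M, S M) < ε
    linarith
  obtain ⟨M, hM, hNM⟩ := ((hlim.eventually (gt_mem_nhds hlt)).and (eventually_gt_atTop N)).exists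
  exact ⟨F, M, hF, hNM, h1.trans_le (min_le_left _ _),
    (ENNReal.toReal_lt_of_lt_ofReal hM).le⟩

include hP0 hsub hmono hcompl hmeas htr hweak habs in
lemma main (ε : ℝ) (hε : 0 < ε) : ∃ E, MeasurableSet E ∧ μ.real E < ε ∧
    (∀ᵐ x ∂μ, limsup (fun n => P n E x) atTop = 1) ∧
    (∀ᵐ x ∂μ, liminf (fun n => P n E x) atTop = 0) := by
  have step : ∀ (k : ℕ) (s : ℕ × {δ : ℝ // 0 < δ}), ∃ (A : Set C) (s' : ℕ × {δ : ℝ // 0 < δ}),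
      MeasurableSet A ∧ s.1 < s'.1 ∧ μ.real A < s.2.1 / 4 ∧ s'.2.1 ≤ s.2.1 / 2 ∧
      μ.real {x | ¬ ∃ n, s.1 ≤ n ∧ n < s'.1 ∧ 1 - (1/2:ℝ)^k < P n A x} ≤ (1/2:ℝ)^k ∧
      ∀ B, MeasurableSet B → μ.real B < s'.2.1 →
        μ.real {x | ∃ n < s'.1, (1/2:ℝ)^k < P n B x} ≤ (1/2:ℝ)^k := by
    rintro k ⟨N, δ, hδ⟩
    obtain ⟨A, M, hA, hNM, h1, h2⟩ := step2 μ P hmono hmeas htr habs hweak ((1/2:ℝ)^k) (δ/4)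
      (by positivity) (pow_le_one₀ (by norm_num) (by norm_num)) (by positivity) N
    obtain ⟨δ', hδ', h3⟩ := abs_fin μ P habs ((1/2:ℝ)^k) (by positivity) M
    exact ⟨A, ⟨M, ⟨min δ' (δ/2), by positivity⟩⟩, hA, hNM, h1, min_le_right _ _, h2,
      fun B hB hBlt => h3 B hB (hBlt.trans_le (min_le_left _ _))⟩
  choose A' nxt hA' hlt' hsmall' hhalf' hbad' htail' using step
  let s : ℕ → ℕ × {δ : ℝ // 0 < δ} := fun k => Nat.rec (0, ⟨ε, hε⟩) (fun k s => nxt k s) k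
  have hs : ∀ k, s (k+1) = nxt k (s k) := fun k => rfl
  let A : ℕ → Set C := fun k => A' k (s k)
  have hA : ∀ k, MeasurableSet (A k) := fun k => hA' k (s k)
  have hlt : ∀ k, (s k).1 < (s (k+1)).1 := fun k => hlt' k (s k)
  have hsmall : ∀ k, μ.real (A k) < (s k).2.1 / 4 := fun k => hsmall' k (s k)
  have hhalf : ∀ k, (s (k+1)).2.1 ≤ (s k).2.1 / 2 := fun k => hhalf' k (s k)
  have hbad : ∀ k, μ.real {x | ¬ ∃ n, (s k).1 ≤ n ∧ n < (s (k+1)).1 ∧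
      1 - (1/2:ℝ)^k < P n (A k) x} ≤ (1/2:ℝ)^k := fun k => hbad' k (s k)
  have htail : ∀ k, ∀ B, MeasurableSet B → μ.real B < (s (k+1)).2.1 →
        μ.real {x | ∃ n < (s (k+1)).1, (1/2:ℝ)^k < P n B x} ≤ (1/2:ℝ)^k :=
    fun k => htail' k (s k)
  have hge : ∀ k, k ≤ (s k).1 := by
    intro k
    induction k with
    | zero => simp
    | succ k ih => have := hlt k; omega
  have hs0 : (s 0).2.1 ≤ ε := le_refl ε
  clear_value A s
  have hgeo : ∀ k i, (s (k+i)).2.1 ≤ (s k).2.1 * (1/2:ℝ)^i := by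
    intro k i
    induction i with
    | zero => simp
    | succ i ih =>
      have := hhalf (k+i)
      rw [pow_succ, ← add_assoc]
      linarith
  -- tail unions
  have hU : ∀ k, μ.real (⋃ i, A (k+i)) < (s k).2.1 := by
    intro k
    have hpos := (s k).2.2
    have hsum : HasSum (fun i : ℕ => (s k).2.1 / 4 * (1/2:ℝ)^i) ((s k).2.1 / 4 * 2) :=
      hasSum_geometric_two.mul_left _
    have h1 : μ (⋃ i, A (k+i)) ≤ ENNReal.ofReal ((s k).2.1 / 4 * 2) := by
      rw [← hsum.tsum_eq, ENNReal.ofReal_tsum_of_nonneg (fun i => by positivity) hsum.summable]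
      refine (measure_iUnion_le _).trans (ENNReal.tsum_le_tsum fun i => ?_)
      rw [← ENNReal.ofReal_toReal (measure_ne_top μ (A (k+i)))]
      apply ENNReal.ofReal_le_ofReal
      have h2 := hsmall (k+i)
      have h3 := hgeo k i
      change μ.real (A (k+i)) ≤ _
      linarith
    have h2 := ENNReal.toReal_mono (by finiteness) h1
    rw [ENNReal.toReal_ofReal (by positivity)] at h2
    change μ.real _ ≤ _ at h2
    linarith
  let B : ℕ → Set C := fun k => ⋃ i, A (k+1+i)
  have hB : ∀ k, MeasurableSet (B k) := fun k => MeasurableSet.iUnion fun i => hA _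
  have hmemB : ∀ k j x, k < j → x ∈ A j → x ∈ B k := by
    intro k j x hkj hx
    refine mem_iUnion.2 ⟨j - (k+1), ?_⟩
    rwa [show k + 1 + (j - (k+1)) = j by omega]
  let E : Set C := ⋃ k, (A (2*k+1) \ B (2*k+1))
  have hE : MeasurableSet E := MeasurableSet.iUnion fun k => (hA _).diff (hB _)
  have hodd : ∀ k, A (2*k+1) ⊆ E ∪ B (2*k+1) := by
    intro k x hx
    by_cases hxB : x ∈ B (2*k+1)
    · exact Or.inr hxB
    · exact Or.inl (mem_iUnion.2 ⟨k, hx, hxB⟩)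
  have heven : ∀ k, E ⊆ (A (2*k))ᶜ ∪ B (2*k) := by
    intro k x hx
    by_cases hxA : x ∈ A (2*k)
    · right
      obtain ⟨j, hj, hjB⟩ := mem_iUnion.1 hx
      rcases lt_or_gt_of_ne (show 2*k ≠ 2*j+1 by omega) with h | h
      · exact hmemB _ _ _ h hj
      · exact absurd (hmemB _ _ _ h hxA) hjB
    · exact Or.inl hxA
  -- Borel-Cantelli
  have hsummable : Summable (fun k : ℕ => (1/2:ℝ)^k) := summable_geometric_two
  have bc : ∀ S : ℕ → Set C, (∀ k, μ.real (S k) ≤ (1/2:ℝ)^k) →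
      ∀ᵐ x ∂μ, ∀ᶠ k in atTop, x ∉ S k := by
    intro S hS
    apply ae_eventually_notMem
    apply ne_top_of_le_ne_top (hsummable.tsum_ofReal_ne_top)
    refine ENNReal.tsum_le_tsum fun i => ?_
    rw [← ENNReal.ofReal_toReal (measure_ne_top μ (S i))]
    exact ENNReal.ofReal_le_ofReal (hS i)
  have bc1 := bc _ hbad
  have bc2 := bc (fun k => {x | ∃ n < (s (k+1)).1, (1/2:ℝ)^k < P n (B k) x})
    (fun k => htail k (B k) (hB k) (hU (k+1)))
  have hP1 : ∀ n E x, MeasurableSet E → P n E x ≤ 1 := by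
    intro n E x hE
    linarith [hcompl n E x hE, hP0 n Eᶜ x hE.compl]
  have key : ∀ᵐ x ∂μ, ∀ η : ℝ, 0 < η → ∃ K, ∀ k, K ≤ k → ∃ n, k ≤ n ∧
      1 - η < P n (A k) x ∧ P n (B k) x < η := by
    filter_upwards [bc1, bc2] with x h1 h2 η hη
    have h3 : ∀ᶠ k : ℕ in atTop, (1/2:ℝ)^k < η :=
      (tendsto_pow_atTop_nhds_zero_of_lt_one (by norm_num) (by norm_num)).eventually
        (gt_mem_nhds hη)
    obtain ⟨K, hK⟩ := eventually_atTop.1 (h1.and (h2.and h3))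
    refine ⟨K, fun k hk => ?_⟩
    obtain ⟨g1, g2, g3⟩ := hK k hk
    simp only [mem_setOf_eq, not_not] at g1
    obtain ⟨n, a, b, c⟩ := g1
    refine ⟨n, (hge k).trans a, by linarith, ?_⟩
    by_contra hcon
    exact g2 ⟨n, b, by linarith⟩
  refine ⟨E, hE, ?_, ?_, ?_⟩
  · have h0 := hU 0
    refine lt_of_le_of_lt (measureReal_mono ?_ (by finiteness)) (h0.trans_le hs0)
    intro x hx
    obtain ⟨j, hj, -⟩ := mem_iUnion.1 hx
    exact mem_iUnion.2 ⟨2*j+1, by simpa using hj⟩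
  · filter_upwards [key] with x hx
    apply limsup_eq_one _ (fun n => hP0 n E x hE) (fun n => hP1 n E x hE)
    intro η hη N
    obtain ⟨K, hK⟩ := hx (η/2) (by positivity)
    obtain ⟨n, a, b, c⟩ := hK (2*(K+N)+1) (by omega)
    refine ⟨n, by omega, ?_⟩
    have := hsub n _ _ _ x (hA _) hE (hB _) (hodd (K+N))
    linarith
  · filter_upwards [key] with x hx
    apply liminf_eq_zero _ (fun n => hP0 n E x hE) (fun n => hP1 n E x hE)
    intro η hη N
    obtain ⟨K, hK⟩ := hx (η/2) (by positivity)
    obtain ⟨n, a, b, c⟩ := hK (2*(K+N)) (by omega)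
    refine ⟨n, by omega, ?_⟩
    have := hsub n _ _ _ x hE (hA _).compl (hB _) (heven (K+N))
    have := hcompl n _ x (hA (2*(K+N)))
    linarith

end

end SweepOut

/-- **Weak δ-sweeping out implies strong sweeping out for translation invariant operators
(Theorem 7).** Let `(T n)` be translation invariant linear operators from `L¹(𝕋)` to
measurable functions satisfying positivity, `T n 1 = 1`, and condition (3). If `(T n)` is
weak `δ`-sweeping out for every `0 < δ < 1`, then it is strong sweeping out. -/
theorem strong_sweeping_out_of_weak_delta_sweeping_out
    (T : ℕ → (Circle1 → ℝ) → (Circle1 → ℝ))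
    -- `T n` is linear (on integrable functions) and maps into measurable functions
    (hadd : ∀ n f g, Integrable f volume → Integrable g volume →
      T n (fun x => f x + g x) = fun x => T n f x + T n g x)
    (hsmul : ∀ (n : ℕ) (c : ℝ) (f), Integrable f volume →
      T n (fun x => c * f x) = fun x => c * T n f x)
    (hmeas : ∀ n f, Integrable f volume → Measurable (T n f))
    -- translation invariance: `T n f_x(t) = (T n f)(x + t)` where `f_x(t) = f(x+t)`
    (htrans : ∀ n f, Integrable f volume →
      ∀ x : Circle1, T n (fun t => f (x + t)) = fun t => T n f (x + t))
    -- (1) positivity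
    (hpos : ∀ n f, Integrable f volume → (∀ x, 0 ≤ f x) → ∀ x, 0 ≤ T n f x)
    -- (2) `T n 𝟙_𝕋 = 1`
    (hone : ∀ n, T n (fun _ => 1) = fun _ => 1)
    -- (3) continuity at small sets
    (habs : ∀ ε : ℝ, 0 < ε → ∃ δ : ℝ, 0 < δ ∧
      ∀ E : Set Circle1, MeasurableSet E → volume E < ENNReal.ofReal δ →
        ∀ n, volume {x | ε < T n (E.indicator fun _ => (1:ℝ)) x} < ENNReal.ofReal ε)
    -- `(T n)` is weak δ-sweeping out for every `0 < δ < 1`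
    (hweak : ∀ δ : ℝ, 0 < δ → δ < 1 → ∀ r : ℝ, 0 < r →
      ∃ E : Set Circle1, MeasurableSet E ∧
        ENNReal.ofReal r * volume E <
          volume {x | δ ≤ ⨆ n, T n (E.indicator fun _ => (1:ℝ)) x}) :
    -- conclusion: strong sweeping out
    ∀ ε : ℝ, 0 < ε →
      ∃ E : Set Circle1, MeasurableSet E ∧ volume E < ENNReal.ofReal ε ∧
        (∀ᵐ x, limsup (fun n => T n (E.indicator fun _ => (1:ℝ)) x) atTop = 1) ∧
        (∀ᵐ x, liminf (fun n => T n (E.indicator fun _ => (1:ℝ)) x) atTop = 0) := by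
  intro ε hε
  haveI : IsProbabilityMeasure (volume : Measure Circle1) :=
    ⟨by simpa using AddCircle.measure_univ (1 : ℝ)⟩
  have hint : ∀ E : Set Circle1, MeasurableSet E →
      Integrable (E.indicator fun _ => (1:ℝ)) volume :=
    fun E hE => (integrable_const 1).indicator hE
  have hle : ∀ n f g, Integrable f volume → Integrable g volume → (∀ x, f x ≤ g x) →
      ∀ x, T n f x ≤ T n g x := by
    intro n f g hf hg hfg x
    have h1 := hadd n f (fun x => g x - f x) hf (hg.sub hf)
    have h2 := hpos n (fun x => g x - f x) (hg.sub hf) (fun x => sub_nonneg.2 (hfg x)) x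
    have h3 : (fun x => f x + (g x - f x)) = g := by ext; ring
    rw [h3] at h1
    rw [h1]
    linarith
  have hP0 : ∀ n E x, MeasurableSet E → 0 ≤ T n (E.indicator fun _ => (1:ℝ)) x :=
    fun n E x hE => hpos n _ (hint E hE) (fun y => indicator_nonneg (by simp) y) x
  have hcompl : ∀ n E x, MeasurableSet E →
      T n (E.indicator fun _ => (1:ℝ)) x + T n (Eᶜ.indicator fun _ => (1:ℝ)) x = 1 := by
    intro n E x hE
    have h1 := hadd n _ _ (hint E hE) (hint Eᶜ hE.compl)
    have h3 : (fun x => E.indicator (fun _ => (1:ℝ)) x + Eᶜ.indicator (fun _ => (1:ℝ)) x)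
        = fun _ => 1 := by
      ext y
      by_cases hy : y ∈ E <;> simp [hy]
    rw [h3, hone] at h1
    exact (congrFun h1 x).symm
  have hP1 : ∀ n E x, MeasurableSet E → T n (E.indicator fun _ => (1:ℝ)) x ≤ 1 := by
    intro n E x hE
    linarith [hcompl n E x hE, hP0 n Eᶜ x hE.compl]
  have hmain : ∃ E : Set Circle1, MeasurableSet E ∧ volume.real E < ε ∧
      (∀ᵐ x, limsup (fun n => T n (E.indicator fun _ => (1:ℝ)) x) atTop = 1) ∧
      (∀ᵐ x, liminf (fun n => T n (E.indicator fun _ => (1:ℝ)) x) atTop = 0) := by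
    refine SweepOut.main (volume : Measure Circle1)
      (fun n E => T n (E.indicator fun _ => (1:ℝ))) hP0 ?_ ?_ hcompl ?_ ?_ ?_ ?_ ε hε
    · intro n E F G x hE hF hG hEFG
      have e := congrFun (hadd n _ _ (hint F hF) (hint G hG)) x
      refine le_trans ?_ (le_of_eq e)
      apply hle n _ _ (hint E hE) ((hint F hF).add (hint G hG))
      intro y
      rw [Pi.add_apply]
      have hF0 : 0 ≤ F.indicator (fun _ => (1:ℝ)) y := indicator_nonneg (by simp) y
      have hG0 : 0 ≤ G.indicator (fun _ => (1:ℝ)) y := indicator_nonneg (by simp) y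
      by_cases hy : y ∈ E
      · rcases hEFG hy with h | h
        · rw [indicator_of_mem hy, indicator_of_mem h]; linarith
        · rw [indicator_of_mem hy, indicator_of_mem h]; linarith
      · rw [indicator_of_notMem hy]; linarith
    · intro n E F x hE hF hEF
      exact hle n _ _ (hint E hE) (hint F hF)
        (fun y => indicator_le_indicator_of_subset hEF (fun _ => zero_le_one) y) x
    · exact fun n E hE => hmeas n _ (hint E hE)
    · intro n E x t hE
      exact congrFun (htrans n _ (hint E hE) x) t
    · intro η hη
      obtain ⟨δ, hδ, h⟩ := habs η hη
      refine ⟨δ, hδ, fun E hE hEδ n => ?_⟩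
      refine (ENNReal.toReal_lt_of_lt_ofReal (h E hE ?_ n)).le
      rw [← ENNReal.ofReal_toReal (measure_ne_top volume E), ENNReal.ofReal_lt_ofReal_iff hδ]
      exact hEδ
    · intro c hc hc1 r hr
      obtain ⟨E, hE, h⟩ := hweak ((c + 1) / 2) (by linarith) (by linarith) r hr
      refine ⟨E, hE, ?_⟩
      have h' := (ENNReal.toReal_lt_toReal (by finiteness) (by finiteness)).2 h
      rw [ENNReal.toReal_mul, ENNReal.toReal_ofReal hr.le] at h'
      refine lt_of_lt_of_le h' (measureReal_mono ?_ (by finiteness))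
      intro x hx
      exact exists_lt_of_lt_ciSup (lt_of_lt_of_le (by linarith) hx)
  obtain ⟨E, hE, h1, h2, h3⟩ := hmain
  refine ⟨E, hE, ?_, h2, h3⟩
  rw [← ENNReal.ofReal_toReal (measure_ne_top volume E), ENNReal.ofReal_lt_ofReal_iff hε]
  exact h1
end

section
/- Let D ⊆ ℕ be a set of positive integers such that for every n ≥ 1 there is a subset D_n ⊆ D of n elements none of which divides the least common multiple of the other members of D_n. Then the sequence of Riemann sum operators (R_n)_{n∈D} is strong sweeping out: for every ε > 0 there exists a measurable set E ⊆ 𝕋 with |E| < ε such that limsup_{n→∞, n∈D} R_n 𝟙_E(x) = 1 for almost every x and liminf_{n→∞, n∈D} R_n 𝟙_E(x) = 0 for almost every x. -/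
open MeasureTheory Filter Set

namespace RSO

/-- indicator of a set, real valued -/
noncomputable abbrev ind (A : Set Circle1) : Circle1 → ℝ := A.indicator fun _ => (1:ℝ)

lemma ind_nonneg (A : Set Circle1) (x) : 0 ≤ ind A x := by
  unfold ind; exact Set.indicator_nonneg (fun _ _ => zero_le_one) x

lemma R_mono (n : ℕ) {f g : Circle1 → ℝ} (h : ∀ x, f x ≤ g x) (x) :
    RiemannSum n f x ≤ RiemannSum n g x := by
  unfold RiemannSum
  gcongr
  exact h _

lemma ind_mono {A B : Set Circle1} (h : A ⊆ B) (x) : ind A x ≤ ind B x := by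
  unfold ind
  exact Set.indicator_le_indicator_of_subset h (fun _ => zero_le_one) x

lemma R_add (n : ℕ) (f g : Circle1 → ℝ) (x) :
    RiemannSum n (fun y => f y + g y) x = RiemannSum n f x + RiemannSum n g x := by
  unfold RiemannSum
  rw [Finset.sum_add_distrib, mul_add]

lemma R_nonneg (n : ℕ) (A : Set Circle1) (x) : 0 ≤ RiemannSum n (ind A) x := by
  unfold RiemannSum
  have : 0 ≤ ∑ k ∈ Finset.range n, ind A (x + (((k : ℝ) / (n : ℝ) : ℝ) : Circle1)) :=
    Finset.sum_nonneg fun _ _ => ind_nonneg _ _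
  positivity

lemma R_const (n : ℕ) (hn : 0 < n) (c : ℝ) (x) : RiemannSum n (fun _ => c) x = c := by
  unfold RiemannSum
  have : (n:ℝ) ≠ 0 := by positivity
  simp [this]

lemma R_le_one (n : ℕ) (A : Set Circle1) (x) : RiemannSum n (ind A) x ≤ 1 := by
  rcases Nat.eq_zero_or_pos n with h | h
  · subst h; simp [RiemannSum]
  · rw [← R_const n h 1 x]
    apply R_mono
    intro y
    exact Set.indicator_le_self' (fun _ _ => zero_le_one) y

lemma R_inv (n : ℕ) (W U : Set Circle1)
    (hW : ∀ (x : Circle1) (k : ℕ), x + (((k : ℝ) / (n : ℝ) : ℝ) : Circle1) ∈ W ↔ x ∈ W) (x) :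
    RiemannSum n (ind (W ∩ U)) x = ind W x * RiemannSum n (ind U) x := by
  classical
  unfold RiemannSum
  rw [mul_left_comm]
  congr 1
  rw [Finset.mul_sum]
  apply Finset.sum_congr rfl
  intro k _
  simp only [ind, Set.indicator_apply, Set.mem_inter_iff, hW]
  split_ifs <;> simp_all

lemma ind_integrable {A : Set Circle1} (hA : MeasurableSet A) : Integrable (ind A) volume :=
  (integrable_const (1:ℝ)).indicator hA

lemma integral_ind {A : Set Circle1} (hA : MeasurableSet A) :
    ∫ x, ind A x = volume.real A := by
  unfold ind
  rw [integral_indicator hA]; simp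

lemma R_integrable (n : ℕ) {A : Set Circle1} (hA : MeasurableSet A) :
    Integrable (RiemannSum n (ind A)) volume := by
  unfold RiemannSum
  apply Integrable.const_mul
  apply integrable_finsetSum
  intro k _
  exact (ind_integrable hA).comp_add_right _

lemma R_integral (n : ℕ) (hn : 0 < n) {A : Set Circle1} (hA : MeasurableSet A) :
    ∫ x, RiemannSum n (ind A) x = volume.real A := by
  unfold RiemannSum
  rw [integral_const_mul, integral_finsetSum]
  · have : (n:ℝ) ≠ 0 := by positivity
    simp only [integral_add_right_eq_self (μ := volume) (ind A), integral_ind hA]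
    simp [this]
  · intro k _
    exact (ind_integrable hA).comp_add_right _

lemma R_markov (n : ℕ) (hn : 0 < n) {A : Set Circle1} (hA : MeasurableSet A) (c : ℝ) :
    c * volume.real {x | c ≤ RiemannSum n (ind A) x} ≤ volume.real A := by
  rw [← R_integral n hn hA]
  exact mul_meas_ge_le_integral_of_nonneg (Filter.Eventually.of_forall fun x => R_nonneg n A x)
    (R_integrable n hA) c

lemma R_measurable (n : ℕ) {A : Set Circle1} (hA : MeasurableSet A) :
    Measurable (RiemannSum n (ind A)) := by
  unfold RiemannSum ind
  apply Measurable.const_mul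
  apply Finset.measurable_fun_sum
  intro k _
  exact (measurable_const.indicator hA).comp (measurable_add_const _)

lemma R_translate (n : ℕ) (A : Set Circle1) (t x : Circle1) :
    RiemannSum n (ind {y | y - t ∈ A}) x = RiemannSum n (ind A) (x - t) := by
  classical
  unfold RiemannSum
  congr 1
  apply Finset.sum_congr rfl
  intro k _
  simp only [ind, Set.indicator_apply, Set.mem_ofPred_eq, add_sub_right_comm]

/-- number theory lemma -/
lemma arith (D : Set ℕ)
    (hD : ∀ n : ℕ, 1 ≤ n → ∃ F : Finset ℕ, (F : Set ℕ) ⊆ D ∧ F.card = n ∧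
      ∀ m ∈ F, ¬ m ∣ (F.erase m).lcm id) (N P n : ℕ) :
    ∃ (S : Finset ℕ) (L : ℕ) (r : ℕ → ℕ), (S : Set ℕ) ⊆ D ∧ n ≤ S.card ∧ 0 < L ∧
      ∀ m ∈ S, N ≤ m ∧ 0 < m ∧ P ≤ r m ∧ r m ∣ m ∧ m ∣ L ∧ Nat.Coprime (L / m) (r m) ∧
        ∀ m' ∈ S, m' ≠ m → r m ∣ L / m' := by
  classical
  obtain ⟨F, hFD, hFc, hF⟩ := hD (n + N + P + 2) (by omega)
  have h0 : 0 ∉ F := by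
    intro h0
    have : 1 < F.card := by omega
    obtain ⟨a, ha, ha0⟩ := Finset.exists_mem_ne this 0
    apply hF a ha
    have : (F.erase a).lcm id = 0 := by
      rw [Finset.lcm_eq_zero_iff]
      exact ⟨0, by simp [h0, ha0.symm], rfl⟩
    rw [this]; exact dvd_zero _
  set Λ : ℕ → ℕ := fun m => (F.erase m).lcm id with hΛ
  have hΛ0 : ∀ m, Λ m ≠ 0 := by
    intro m h
    rw [hΛ] at h
    simp only [Finset.lcm_eq_zero_iff] at h
    obtain ⟨a, ha, h⟩ := h
    simp at h ha
    exact h0 (h ▸ ha.2)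
  set L := F.lcm id with hL
  have hLm : ∀ m ∈ F, L = Nat.lcm m (Λ m) := by
    intro m hm
    rw [hL, ← Finset.insert_erase hm, Finset.lcm_insert]
    simp [hΛ]; rfl
  have hL0 : L ≠ 0 := by
    intro h
    rw [hL] at h
    simp only [Finset.lcm_eq_zero_iff] at h
    obtain ⟨a, ha, h⟩ := h
    simp at h ha
    exact h0 (h ▸ ha)
  set r : ℕ → ℕ := fun m => m / Nat.gcd m (Λ m) with hr
  have hpos : ∀ m ∈ F, 0 < m := fun m hm => Nat.pos_of_ne_zero fun h => h0 (h ▸ hm)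
  have hdvd : ∀ m ∈ F, ∀ m' ∈ F, m' ≠ m → m' ∣ Λ m := by
    intro m hm m' hm' hne
    exact Finset.dvd_lcm (f := id) (Finset.mem_erase.2 ⟨hne, hm'⟩)
  have hrΛ : ∀ m ∈ F, L = r m * Λ m := by
    intro m hm
    rw [hLm m hm, Nat.lcm, hr]
    exact (Nat.div_mul_right_comm (Nat.gcd_dvd_left _ _) _).symm
  have hcop : ∀ m ∈ F, Nat.Coprime (L / m) (r m) := by
    intro m hm
    have : L / m = Λ m / Nat.gcd m (Λ m) := by
      rw [hLm m hm]
      apply Nat.div_eq_of_eq_mul_right (hpos m hm)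
      rw [Nat.lcm]
      exact Nat.mul_div_assoc _ (Nat.gcd_dvd_right _ _)
    rw [this]
    exact (Nat.coprime_div_gcd_div_gcd (Nat.gcd_pos_of_pos_left _ (hpos m hm))).symm
  have hrd : ∀ m ∈ F, ∀ m' ∈ F, m' ≠ m → r m ∣ L / m' := by
    intro m hm m' hm' hne
    obtain ⟨c, hc⟩ := hdvd m hm m' hm' hne
    refine ⟨c, ?_⟩
    apply Nat.div_eq_of_eq_mul_right (hpos m' hm')
    rw [hrΛ m hm, hc]; ring
  have hr1 : ∀ m ∈ F, r m ≠ 1 := by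
    intro m hm h
    apply hF m hm
    have h2 := hrΛ m hm
    rw [h, one_mul] at h2
    change m ∣ Λ m
    rw [← h2]
    exact Finset.dvd_lcm (f := id) hm
  have hinj : ∀ m ∈ F, ∀ m' ∈ F, r m = r m' → m = m' := by
    intro m hm m' hm' h
    by_contra hne
    have h1 := hrd m hm m' hm' (Ne.symm hne)
    have h2 := hcop m' hm'
    rw [← h] at h2
    exact hr1 m hm (Nat.eq_one_of_dvd_coprimes h2 h1 dvd_rfl)
  refine ⟨F.filter (fun m => N ≤ m ∧ P ≤ r m), L, r, ?_, ?_, Nat.pos_of_ne_zero hL0, ?_⟩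
  · intro m hm
    simp at hm
    exact hFD hm.1
  · have h1 : (F.filter (fun m => m < N)).card ≤ N := by
      calc _ ≤ (Finset.range N).card := Finset.card_le_card (by intro m; simp)
        _ = N := by simp
    have h2 : (F.filter (fun m => r m < P)).card ≤ P := by
      calc _ ≤ (Finset.range P).card := Finset.card_le_card_of_injOn r (by intro m; simp)
              (by
                intro a ha b hb hab
                simp at ha hb
                exact hinj a ha.1 b hb.1 hab)
        _ = P := by simp
    have h3 : F ⊆ F.filter (fun m => N ≤ m ∧ P ≤ r m) ∪
        (F.filter (fun m => m < N) ∪ F.filter (fun m => r m < P)) := by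
      intro m hm
      simp only [Finset.mem_union, Finset.mem_filter, hm, true_and]
      omega
    have h4 := (Finset.card_le_card h3).trans (Finset.card_union_le _ _)
    have h5 := Finset.card_union_le (F.filter (fun m => m < N)) (F.filter (fun m => r m < P))
    omega
  · intro m hm
    simp only [Finset.mem_filter] at hm
    refine ⟨hm.2.1, hpos m hm.1, hm.2.2, Nat.div_dvd_of_dvd (Nat.gcd_dvd_left _ _),
      Finset.dvd_lcm (f := id) hm.1, hcop m hm.1, ?_⟩
    intro m' hm' hne
    simp only [Finset.mem_filter] at hm'
    exact hrd m hm.1 m' hm'.1 hne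

instance : IsProbabilityMeasure (volume : Measure Circle1) := ⟨by simp⟩

lemma sum_range_zmod (r : ℕ) [NeZero r] (f : ZMod r → ℝ) :
    ∑ k ∈ Finset.range r, f (k : ZMod r) = ∑ z : ZMod r, f z := by
  refine Finset.sum_bij' (fun k _ => (k : ZMod r)) (fun z _ => z.val) ?_ ?_ ?_ ?_ ?_
  · intros; simp
  · intro z _; simpa using ZMod.val_lt z
  · intro k hk; simp at hk; exact ZMod.val_cast_of_lt hk
  · intro z _; simp
  · intros; rfl

lemma sum_range_mul_zmod (r : ℕ) [NeZero r] (g : ℕ) (f : ZMod r → ℝ) :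
    ∑ k ∈ Finset.range (r * g), f (k : ZMod r) = g * ∑ z : ZMod r, f z := by
  induction g with
  | zero => simp
  | succ g ih =>
    rw [mul_add, mul_one, Finset.sum_range_add, ih, ← sum_range_zmod r f]
    push_cast
    simp
    ring

lemma coord (L r m : ℕ) (hm : 0 < m) (hrm : r ∣ m) (hmL : m ∣ L)
    (hcop : Nat.Coprime (L / m) r) (δ : ℝ) (hδ0 : 0 < δ) (hδ1 : δ ≤ 1) (hr : 1 ≤ δ * r) :
    ∃ (U : Set Circle1) (η : ℝ), MeasurableSet U ∧ δ / 2 ≤ η ∧ η ≤ δ ∧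
      (∀ x, RiemannSum m (ind U) x = η) ∧
      ∀ m' : ℕ, 0 < m' → m' ∣ L → r ∣ L / m' → ∀ (x : Circle1) (k : ℕ),
        x + (((k : ℝ) / (m' : ℝ) : ℝ) : Circle1) ∈ U ↔ x ∈ U := by
  classical
  have hr0 : 0 < r := Nat.pos_of_dvd_of_pos hrm hm
  have : NeZero r := ⟨hr0.ne'⟩
  have hfl : ⌊δ * r⌋₊ ≤ (Finset.univ : Finset (ZMod r)).card := by
    rw [Finset.card_univ, ZMod.card]
    apply Nat.floor_le_of_le
    nlinarith [(Nat.cast_nonneg r : (0:ℝ) ≤ r)]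
  obtain ⟨C, -, hC⟩ := Finset.exists_subset_card_eq hfl
  set φ : ℝ → ZMod r := fun t => ((⌊(L:ℝ) * t⌋ : ℤ) : ZMod r) with hφ
  have hshift : ∀ m' : ℕ, 0 < m' → m' ∣ L → ∀ (t : ℝ) (k : ℕ),
      φ (t + (k:ℝ) / m') = φ t + ((L / m' : ℕ) : ZMod r) * k := by
    intro m' hm' hd t k
    obtain ⟨a, rfl⟩ := hd
    have hm0 : (m' : ℝ) ≠ 0 := by positivity
    have h1 : ((m' * a : ℕ) : ℝ) * (t + (k:ℝ) / m') = ((m' * a : ℕ) : ℝ) * t + ((a * k : ℤ) : ℝ) := by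
      push_cast
      field_simp
    rw [Nat.mul_div_cancel_left _ hm']
    simp only [hφ]
    rw [h1, Int.floor_add_intCast]
    push_cast
    ring
  have hper : Function.Periodic φ 1 := by
    intro t
    have := hshift 1 one_pos (one_dvd _) t 1
    simp at this
    rw [this]
    have : (L : ZMod r) = 0 := (ZMod.natCast_eq_zero_iff _ _).2 (hrm.trans hmL)
    simp [this]
  set Φ : Circle1 → ZMod r := hper.lift with hΦ
  have hΦs : ∀ m' : ℕ, 0 < m' → m' ∣ L → ∀ (x : Circle1) (k : ℕ),
      Φ (x + (((k : ℝ) / (m' : ℝ) : ℝ) : Circle1)) = Φ x + ((L / m' : ℕ) : ZMod r) * k := by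
    intro m' hm' hd x k
    induction x using QuotientAddGroup.induction_on with
    | H t =>
      have h2 := hshift m' hm' hd t k
      exact h2
  refine ⟨{x | Φ x ∈ C}, (C.card : ℝ) / r, ?_, ?_, ?_, ?_, ?_⟩
  · apply measurableSet_quotient.2
    change MeasurableSet {t : ℝ | φ t ∈ C}
    have : Measurable fun t : ℝ => ⌊(L:ℝ) * t⌋ :=
      Int.measurable_floor.comp (measurable_const_mul _)
    exact this (MeasurableSet.of_discrete (s := {z : ℤ | (z : ZMod r) ∈ C}))
  · rw [hC, le_div_iff₀ (by positivity)]
    have h1 := Nat.lt_floor_add_one (δ * r)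
    have h2 : 1 ≤ ⌊δ * r⌋₊ := Nat.le_floor (by simpa using hr)
    have h3 : (1:ℝ) ≤ ⌊δ * r⌋₊ := by exact_mod_cast h2
    linarith
  · rw [hC, div_le_iff₀ (by positivity)]
    exact Nat.floor_le (by positivity)
  · intro x
    obtain ⟨g, hg⟩ := hrm
    have hg0 : (g:ℝ) ≠ 0 := by
      rintro h
      have : g = 0 := by exact_mod_cast h
      subst this; omega
    unfold RiemannSum
    simp only [ind, Set.indicator_apply, Set.mem_ofPred_eq, hΦs m hm hmL]
    set u := ZMod.unitOfCoprime _ hcop with hu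
    have hu' : ((L / m : ℕ) : ZMod r) = u := by simp [hu]
    rw [hu']
    have h1 := sum_range_mul_zmod r g (fun z => if Φ x + u * z ∈ C then (1:ℝ) else 0)
    rw [← hg] at h1
    rw [h1]
    have h2 : ∑ z : ZMod r, (if Φ x + u * z ∈ C then (1:ℝ) else 0) = C.card := by
      have h3 := Equiv.sum_comp ((Units.mulLeft u).trans (Equiv.addLeft (Φ x)))
        (fun z => if z ∈ C then (1:ℝ) else 0)
      simp only [Equiv.trans_apply, Units.mulLeft_apply, Equiv.coe_addLeft] at h3
      rw [h3]
      simp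
    rw [h2, hg]
    have : (r:ℝ) ≠ 0 := by positivity
    push_cast
    field_simp
  · intro m' hm' hd hrd x k
    have : ((L / m' : ℕ) : ZMod r) = 0 := (ZMod.natCast_eq_zero_iff _ _).2 hrd
    simp only [Set.mem_ofPred_eq, hΦs m' hm' hd, this, zero_mul, add_zero]

lemma measure_inter (n : ℕ) (hn : 0 < n) (W U : Set Circle1) (hWm : MeasurableSet W)
    (hUm : MeasurableSet U) (η : ℝ) (hU : ∀ x, RiemannSum n (ind U) x = η)
    (hW : ∀ (x : Circle1) (k : ℕ), x + (((k : ℝ) / (n : ℝ) : ℝ) : Circle1) ∈ W ↔ x ∈ W) :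
    volume.real (W ∩ U) = η * volume.real W := by
  rw [← R_integral n hn (hWm.inter hUm)]
  simp only [R_inv n W U hW, hU]
  rw [integral_mul_const, integral_ind hWm, mul_comm]

lemma R_compl (n : ℕ) (hn : 0 < n) (U : Set Circle1) (x) :
    RiemannSum n (ind Uᶜ) x = 1 - RiemannSum n (ind U) x := by
  have h := R_add n (ind U) (ind Uᶜ) x
  have h2 : (fun y => ind U y + ind Uᶜ y) = fun _ => 1 := by
    funext y; unfold ind
    exact Set.indicator_self_add_compl_apply U (fun _ => (1:ℝ)) y
  rw [h2, R_const n hn] at h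
  linarith

/-- the set where the maximal function is large -/
def G (S : Finset ℕ) (δ : ℝ) (A : Set Circle1) : Set Circle1 :=
  {x | ∃ n ∈ S, 1 - δ ≤ RiemannSum n (ind A) x}

lemma G_meas (S : Finset ℕ) (δ : ℝ) {A : Set Circle1} (hA : MeasurableSet A) :
    MeasurableSet (G S δ A) := by
  have : G S δ A = ⋃ n ∈ S, {x | 1 - δ ≤ RiemannSum n (ind A) x} := by
    ext x; simp [G]
  rw [this]
  exact Finset.measurableSet_biUnion _ fun n _ =>
    measurableSet_le measurable_const (R_measurable n hA)

lemma block (D : Set ℕ)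
    (hD : ∀ n : ℕ, 1 ≤ n → ∃ F : Finset ℕ, (F : Set ℕ) ⊆ D ∧ F.card = n ∧
      ∀ m ∈ F, ¬ m ∣ (F.erase m).lcm id) (N n : ℕ) (δ : ℝ) (hδ0 : 0 < δ) (hδ1 : δ < 1) :
    ∃ (S : Finset ℕ) (E : Set Circle1), (S : Set ℕ) ⊆ D ∧ (∀ m ∈ S, N ≤ m ∧ 0 < m) ∧
      MeasurableSet E ∧ 0 < volume.real E ∧
      n * (δ / 2) * volume.real E ≤ volume.real (G S δ E) := by
  classical
  obtain ⟨P, hP⟩ := exists_nat_ge (1 / δ)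
  obtain ⟨S, L, r, hSD, hn, hL, hS⟩ := arith D hD N P n
  have key : ∀ m : ℕ, ∃ (U : Set Circle1) (η : ℝ), m ∈ S → (MeasurableSet U ∧ δ / 2 ≤ η ∧ η ≤ δ ∧
      (∀ x, RiemannSum m (ind U) x = η) ∧
      ∀ m' ∈ S, m' ≠ m → ∀ (x : Circle1) (k : ℕ),
        x + (((k : ℝ) / (m' : ℝ) : ℝ) : Circle1) ∈ U ↔ x ∈ U) := by
    intro m
    by_cases hm : m ∈ S
    · obtain ⟨h1, h2, h3, h4, h5, h6, h7⟩ := hS m hm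
      have hP' : 1 ≤ δ * r m := by
        rw [div_le_iff₀ hδ0] at hP
        have : (P:ℝ) ≤ r m := by exact_mod_cast h3
        nlinarith
      obtain ⟨U, η, a1, a2, a3, a4, a5⟩ := coord L (r m) m h2 h4 h5 h6 δ hδ0 hδ1.le hP'
      refine ⟨U, η, fun _ => ⟨a1, a2, a3, a4, ?_⟩⟩
      intro m' hm' hne
      obtain ⟨b1, b2, b3, b4, b5, b6, b7⟩ := hS m' hm'
      exact a5 m' b2 b5 (h7 m' hm' hne)
    · exact ⟨∅, 0, fun h => absurd h hm⟩
  choose U η hU using key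
  -- sets W T
  set W : Finset ℕ → Set Circle1 := fun T => ⋂ m ∈ T, (U m)ᶜ with hW
  have hWm : ∀ T ⊆ S, MeasurableSet (W T) := by
    intro T hT
    exact Finset.measurableSet_biInter _ fun m hm => (hU m (hT hm)).1.compl
  have hWinv : ∀ T ⊆ S, ∀ m ∈ S, m ∉ T → ∀ (x : Circle1) (k : ℕ),
      x + (((k : ℝ) / (m : ℝ) : ℝ) : Circle1) ∈ W T ↔ x ∈ W T := by
    intro T hT m hm hmT x k
    simp only [hW, Set.mem_iInter, Set.mem_compl_iff]
    refine forall₂_congr fun a ha => ?_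
    rw [(hU a (hT ha)).2.2.2.2 m hm (fun h => hmT (h ▸ ha))]
  have hins : ∀ (T : Finset ℕ) (m : ℕ), W (insert m T) = W T ∩ (U m)ᶜ := by
    intro T m
    simp only [hW, Finset.set_biInter_insert, Set.inter_comm]
  have hRc : ∀ m ∈ S, ∀ x, RiemannSum m (ind (U m)ᶜ) x = 1 - η m := by
    intro m hm x
    rw [R_compl m (hS m hm).2.1, (hU m hm).2.2.2.1]
  have hpos : ∀ T ⊆ S, 0 < volume.real (W T) := by
    intro T
    induction T using Finset.induction_on with
    | empty => intro _; simp [hW]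
    | insert m T hmT ih =>
      intro hT
      have hT' : T ⊆ S := (Finset.subset_insert _ _).trans hT
      have hm : m ∈ S := hT (Finset.mem_insert_self _ _)
      rw [hins, measure_inter m (hS m hm).2.1 (W T) _ (hWm T hT') (hU m hm).1.compl _ (hRc m hm)
        (hWinv T hT' m hm hmT)]
      have := (hU m hm).2.2.1
      exact mul_pos (by linarith) (ih hT')
  refine ⟨S, W S, hSD, fun m hm => ⟨(hS m hm).1, (hS m hm).2.1⟩, hWm S subset_rfl,
    hpos S subset_rfl, ?_⟩
  have hWi : ∀ m ∈ S, W S = W (S.erase m) ∩ (U m)ᶜ := by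
    intro m hm
    rw [← hins, Finset.insert_erase hm]
  -- disjoint pieces
  set V : ℕ → Set Circle1 := fun m => W (S.erase m) ∩ U m with hV
  have hVm : ∀ m ∈ S, MeasurableSet (V m) := fun m hm =>
    (hWm _ (Finset.erase_subset _ _)).inter (hU m hm).1
  have hVd : (S : Set ℕ).PairwiseDisjoint V := by
    intro a ha b hb hab
    rw [Function.onFun, Set.disjoint_left]
    rintro x ⟨-, hx2⟩ ⟨hx3, -⟩
    simp only [hW, Set.mem_iInter] at hx3
    exact hx3 a (Finset.mem_erase.2 ⟨hab, ha⟩) hx2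
  have hVG : (⋃ m ∈ S, V m) ⊆ G S δ (W S) := by
    intro x hx
    simp only [Set.mem_iUnion] at hx
    obtain ⟨m, hm, hx⟩ := hx
    refine ⟨m, hm, ?_⟩
    rw [hWi m hm, R_inv m _ _ (hWinv _ (Finset.erase_subset _ _) m hm (Finset.notMem_erase _ _)),
      hRc m hm]
    have : ind (W (S.erase m)) x = 1 := Set.indicator_of_mem hx.1 _
    rw [this]
    have := (hU m hm).2.2.1
    linarith
  have hVv : ∀ m ∈ S, δ / 2 * volume.real (W S) ≤ volume.real (V m) := by
    intro m hm
    rw [hV]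
    simp only
    rw [measure_inter m (hS m hm).2.1 _ _ (hWm _ (Finset.erase_subset _ _)) (hU m hm).1 _
      (hU m hm).2.2.2.1 (hWinv _ (Finset.erase_subset _ _) m hm (Finset.notMem_erase _ _))]
    have h1 := (hU m hm).2.1
    have h2 : volume.real (W S) ≤ volume.real (W (S.erase m)) := by
      have h4 : W S ⊆ W (S.erase m) := by
        rw [hWi m hm]
        exact Set.inter_subset_left
      exact measureReal_mono h4
    have h3 : 0 ≤ volume.real (W S) := measureReal_nonneg
    gcongr
    linarith
  calc n * (δ / 2) * volume.real (W S) ≤ S.card * (δ / 2) * volume.real (W S) := by gcongr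
    _ = ∑ m ∈ S, δ / 2 * volume.real (W S) := by simp; ring
    _ ≤ ∑ m ∈ S, volume.real (V m) := Finset.sum_le_sum hVv
    _ = volume.real (⋃ m ∈ S, V m) := (measureReal_biUnion_finset hVd hVm).symm
    _ ≤ _ := measureReal_mono hVG

lemma translate_step {A B : Set Circle1} (hA : MeasurableSet A) (hB : MeasurableSet B) :
    ∃ t : Circle1, volume.real (A ∩ {y | y - t ∈ B}) ≤ volume.real A * volume.real B := by
  have hms : MeasurableSet {p : Circle1 × Circle1 | p.2 ∈ A ∧ p.2 - p.1 ∈ B} :=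
    (measurable_snd hA).inter ((measurable_snd.sub measurable_fst) hB)
  have hmeas : Measurable fun t : Circle1 => volume (A ∩ {y | y - t ∈ B}) :=
    measurable_measure_prodMk_left hms
  obtain ⟨t, ht⟩ := exists_le_lintegral (μ := (volume : Measure Circle1)) hmeas.aemeasurable
  refine ⟨t, ?_⟩
  have h1 : ∫⁻ t : Circle1, volume (A ∩ {y | y - t ∈ B}) = volume A * volume B := by
    have e1 := Measure.prod_apply (μ := (volume : Measure Circle1))
      (ν := (volume : Measure Circle1)) hms
    have e2 := Measure.prod_apply_symm (μ := (volume : Measure Circle1))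
      (ν := (volume : Measure Circle1)) hms
    have e3 : ∫⁻ t : Circle1, volume (A ∩ {y | y - t ∈ B}) =
      ∫⁻ t : Circle1, volume (Prod.mk t ⁻¹' {p : Circle1 × Circle1 | p.2 ∈ A ∧ p.2 - p.1 ∈ B}) := rfl
    rw [e3, ← e1, e2]
    have e4 : ∀ y : Circle1, volume ((fun x => (x, y)) ⁻¹'
        {p : Circle1 × Circle1 | p.2 ∈ A ∧ p.2 - p.1 ∈ B}) =
        A.indicator (fun _ => volume B) y := by
      intro y
      by_cases hy : y ∈ A
      · rw [Set.indicator_of_mem hy]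
        have : ((fun x => (x, y)) ⁻¹' {p : Circle1 × Circle1 | p.2 ∈ A ∧ p.2 - p.1 ∈ B}) =
          (fun x => y - x) ⁻¹' B := by
          ext x; simp [hy]
        rw [this]
        exact (Measure.measurePreserving_sub_left volume y).measure_preimage hB.nullMeasurableSet
      · rw [Set.indicator_of_notMem hy]
        have : ((fun x => (x, y)) ⁻¹' {p : Circle1 × Circle1 | p.2 ∈ A ∧ p.2 - p.1 ∈ B}) = ∅ := by
          ext x; simp [hy]
        rw [this]; simp
    simp only [e4]
    rw [lintegral_indicator hA]
    simp [mul_comm]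
  rw [h1] at ht
  rw [Measure.real, Measure.real, Measure.real, ← ENNReal.toReal_mul]
  exact ENNReal.toReal_mono (ENNReal.mul_ne_top (measure_ne_top _ _) (measure_ne_top _ _)) ht

lemma meas_translate {B : Set Circle1} (hB : MeasurableSet B) (t : Circle1) :
    MeasurableSet {y | y - t ∈ B} := (measurable_sub_const t) hB

lemma vol_translate {B : Set Circle1} (hB : MeasurableSet B) (t : Circle1) :
    volume.real {y | y - t ∈ B} = volume.real B := by
  unfold Measure.real
  congr 1
  exact (measurePreserving_sub_right volume t).measure_preimage hB.nullMeasurableSet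

lemma translate_many {B : Set Circle1} (hB : MeasurableSet B) (M : ℕ) :
    ∃ T : Finset Circle1, T.card ≤ M ∧
      volume.real (⋂ t ∈ T, {y | y - t ∈ B}) ≤ volume.real B ^ M := by
  classical
  induction M with
  | zero => exact ⟨∅, by simp⟩
  | succ M ih =>
    obtain ⟨T, hT, hv⟩ := ih
    obtain ⟨t, ht⟩ := translate_step (A := ⋂ t ∈ T, {y | y - t ∈ B})
      (Finset.measurableSet_biInter _ fun t _ => meas_translate hB t) hB
    refine ⟨insert t T, (Finset.card_insert_le _ _).trans (by omega), ?_⟩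
    rw [Finset.set_biInter_insert, Set.inter_comm, pow_succ]
    refine ht.trans ?_
    gcongr

lemma key (D : Set ℕ)
    (hD : ∀ n : ℕ, 1 ≤ n → ∃ F : Finset ℕ, (F : Set ℕ) ⊆ D ∧ F.card = n ∧
      ∀ m ∈ F, ¬ m ∣ (F.erase m).lcm id) (N : ℕ) (δ ε : ℝ) (hδ0 : 0 < δ) (hδ1 : δ < 1)
    (hε : 0 < ε) :
    ∃ (S : Finset ℕ) (A : Set Circle1), (S : Set ℕ) ⊆ D ∧ (∀ m ∈ S, N ≤ m ∧ 0 < m) ∧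
      MeasurableSet A ∧ volume.real A ≤ ε ∧ volume.real (G S δ A)ᶜ ≤ δ := by
  classical
  set l := Real.log (1 / δ) with hl
  have hl0 : 0 ≤ l := Real.log_nonneg (by rw [le_div_iff₀ hδ0]; linarith)
  obtain ⟨n, hn⟩ := exists_nat_ge ((l + 1) / ε / (δ / 2))
  obtain ⟨S, E, hSD, hS, hE, hE0, hK⟩ := block D hD N n δ hδ0 hδ1
  set K := n * (δ / 2) with hKdef
  have hKε : (l + 1) / ε ≤ K := by
    rwa [div_le_iff₀ (by positivity)] at hn
  have hK0 : 0 < K := lt_of_lt_of_le (by positivity) hKε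
  set Q := volume.real E with hQ
  set g := volume.real (G S δ E) with hg
  have hGm := G_meas S δ hE
  have hg0 : 0 < g := lt_of_lt_of_le (by positivity) hK
  have hg1 : g ≤ 1 := measureReal_le_one
  set M := ⌈l / g⌉₊ with hM
  obtain ⟨T, hT, hTv⟩ := translate_many hGm.compl M
  refine ⟨S, ⋃ t ∈ T, {y | y - t ∈ E}, hSD, hS,
    Finset.measurableSet_biUnion _ fun t _ => meas_translate hE t, ?_, ?_⟩
  · have h1 : volume.real (⋃ t ∈ T, {y | y - t ∈ E}) ≤ M * Q := by
      calc _ ≤ ∑ t ∈ T, volume.real {y | y - t ∈ E} := measureReal_biUnion_finset_le _ _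
        _ = T.card * Q := by simp [vol_translate hE, hQ]
        _ ≤ M * Q := by gcongr
    have h2 : (M:ℝ) ≤ l / g + 1 := (Nat.ceil_lt_add_one (by positivity)).le
    have h3 : (l / g + 1) * Q ≤ (l + 1) * (Q / g) := by
      have : Q ≤ Q / g := by
        rw [le_div_iff₀ hg0]; nlinarith
      calc (l / g + 1) * Q = l * (Q / g) + Q := by ring
        _ ≤ _ := by linarith
    have h4 : Q / g ≤ 1 / K := by
      rw [div_le_div_iff₀ hg0 hK0]; linarith
    have h5 : (l + 1) * (1 / K) ≤ ε := by
      rw [div_le_iff₀ hε] at hKε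
      rw [mul_one_div, div_le_iff₀ hK0]; linarith
    calc _ ≤ M * Q := h1
      _ ≤ (l / g + 1) * Q := by gcongr
      _ ≤ (l + 1) * (Q / g) := h3
      _ ≤ (l + 1) * (1 / K) := by gcongr
      _ ≤ ε := h5
  · have hsub : (G S δ (⋃ t ∈ T, {y | y - t ∈ E}))ᶜ ⊆ ⋂ t ∈ T, {y | y - t ∈ (G S δ E)ᶜ} := by
      intro x hx
      simp only [Set.mem_iInter]
      intro t ht hxt
      apply hx
      obtain ⟨m, hm, h⟩ := hxt
      refine ⟨m, hm, h.trans ?_⟩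
      rw [← R_translate]
      apply R_mono
      apply ind_mono
      exact Set.subset_biUnion_of_mem (u := fun t => {y | y - t ∈ E}) ht
    refine (measureReal_mono hsub).trans (hTv.trans ?_)
    rw [probReal_compl_eq_one_sub hGm]
    have h1 : 1 - g ≤ Real.exp (-g) := by
      have := Real.add_one_le_exp (-g); linarith
    calc (1 - g) ^ M ≤ Real.exp (-g) ^ M := by
          gcongr
      _ = Real.exp (-(g * M)) := by rw [← Real.exp_nat_mul]; ring_nf
      _ ≤ Real.exp (-l) := by
          apply Real.exp_le_exp.2
          have : l / g ≤ M := Nat.le_ceil _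
          rw [div_le_iff₀ hg0] at this
          linarith
      _ = δ := by
          rw [hl, one_div, Real.log_inv, neg_neg, Real.exp_log hδ0]

lemma vol_iUnion (A : ℕ → Set Circle1) (c : ℝ) (hc : 0 ≤ c)
    (h : ∀ i, volume.real (A i) ≤ c * (1 / 2) ^ i) : volume.real (⋃ i, A i) ≤ 2 * c := by
  have hs : HasSum (fun i : ℕ => c * (1 / 2 : ℝ) ^ i) (c * 2) := hasSum_geometric_two.mul_left c
  have h1 : volume (⋃ i, A i) ≤ ENNReal.ofReal (2 * c) := by
    calc _ ≤ ∑' i, volume (A i) := measure_iUnion_le _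
      _ ≤ ∑' i, ENNReal.ofReal (c * (1 / 2) ^ i) := by
          apply ENNReal.tsum_le_tsum
          intro i
          rw [← ofReal_measureReal]
          exact ENNReal.ofReal_le_ofReal (h i)
      _ = ENNReal.ofReal (2 * c) := by
          rw [← ENNReal.ofReal_tsum_of_nonneg (fun i => by positivity) hs.summable, hs.tsum_eq,
            mul_comm]
  exact ENNReal.toReal_le_of_le_ofReal (by positivity) h1

lemma limsup_one {f : Filter ℕ} {u : ℕ → ℝ} (h0 : ∀ n, 0 ≤ u n) (h1 : ∀ n, u n ≤ 1)
    (h : ∀ a < 1, ∃ᶠ n in f, a ≤ u n) : limsup u f = 1 := by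
  have : f.NeBot := ⟨fun hf => h 0 one_pos (by simp [hf])⟩
  have hb : IsBoundedUnder (· ≤ ·) f u := isBoundedUnder_of ⟨1, h1⟩
  have hb' : IsBoundedUnder (· ≥ ·) f u := isBoundedUnder_of ⟨0, h0⟩
  apply le_antisymm
  · exact limsup_le_of_le hb'.isCoboundedUnder_flip (Eventually.of_forall h1)
  · apply le_of_forall_lt
    intro a ha
    exact lt_of_lt_of_le (by linarith : a < (a + 1) / 2)
      (le_limsup_of_frequently_le (h _ (by linarith)) hb)

lemma liminf_zero {f : Filter ℕ} {u : ℕ → ℝ} (h0 : ∀ n, 0 ≤ u n) (h1 : ∀ n, u n ≤ 1)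
    (h : ∀ a > 0, ∃ᶠ n in f, u n ≤ a) : liminf u f = 0 := by
  have : f.NeBot := ⟨fun hf => h 1 one_pos (by simp [hf])⟩
  have hb : IsBoundedUnder (· ≤ ·) f u := isBoundedUnder_of ⟨1, h1⟩
  have hb' : IsBoundedUnder (· ≥ ·) f u := isBoundedUnder_of ⟨0, h0⟩
  apply le_antisymm
  · apply le_of_forall_gt
    intro a ha
    exact lt_of_le_of_lt (liminf_le_of_frequently_le (h (a / 2) (by linarith)) hb')
      (by linarith : a / 2 < a)
  · exact le_liminf_of_le hb.isCoboundedUnder_flip (Eventually.of_forall h0)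

lemma main (D : Set ℕ)
    (hD : ∀ n : ℕ, 1 ≤ n → ∃ F : Finset ℕ, (F : Set ℕ) ⊆ D ∧ F.card = n ∧
      ∀ m ∈ F, ¬ m ∣ (F.erase m).lcm id) (ε : ℝ) (hε : 0 < ε) :
    ∃ E : Set Circle1, MeasurableSet E ∧ volume.real E < ε ∧
      ∀ᵐ x : Circle1, ∃ K : ℕ, ∀ k ≥ K, ∃ n ∈ D, k ≤ n ∧
        (Even k → 1 - 2 * (1 / 2 : ℝ) ^ (k + 1) ≤ RiemannSum n (ind E) x) ∧
        (¬ Even k → RiemannSum n (ind E) x ≤ 2 * (1 / 2 : ℝ) ^ (k + 1)) := by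
  classical
  set d : ℕ → ℝ := fun k => (1 / 2 : ℝ) ^ (k + 1) with hd
  have hd0 : ∀ k, 0 < d k := fun k => by positivity
  have hd1 : ∀ k, d k < 1 := fun k => pow_lt_one₀ (by norm_num) (by norm_num) (by omega)
  have hkey : ∀ (k : ℕ) (e : ℝ), ∃ (S : Finset ℕ) (A : Set Circle1), 0 < e →
      ((S : Set ℕ) ⊆ D ∧ (∀ m ∈ S, k ≤ m ∧ 0 < m) ∧
      MeasurableSet A ∧ volume.real A ≤ e ∧ volume.real (G S (d k) A)ᶜ ≤ d k) := by
    intro k e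
    by_cases he : 0 < e
    · obtain ⟨S, A, h⟩ := key D hD k (d k) e (hd0 k) (hd1 k) he
      exact ⟨S, A, fun _ => h⟩
    · exact ⟨∅, ∅, fun h => absurd h he⟩
  choose S0 A0 h0 using hkey
  let c : ℕ → ℝ := fun k => Nat.rec (ε / 4)
    (fun k e => min (e / 2) (d k ^ 2 / (2 * ((S0 k e).card + 1)))) k
  have hcs : ∀ k, c (k + 1) = min (c k / 2) (d k ^ 2 / (2 * ((S0 k (c k)).card + 1))) :=
    fun k => rfl
  have hc0 : ∀ k, 0 < c k := by
    intro k
    induction k with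
    | zero => change 0 < ε / 4; positivity
    | succ k ih =>
      rw [hcs]
      have := hd0 k
      exact lt_min (by positivity) (by positivity)
  have hcd : ∀ k i, c (k + i) ≤ c k * (1 / 2) ^ i := by
    intro k i
    induction i with
    | zero => simp
    | succ i ih =>
      have := (hcs (k + i)).le.trans (min_le_left _ _)
      rw [← add_assoc, pow_succ]
      linarith
  set S : ℕ → Finset ℕ := fun k => S0 k (c k) with hS
  set A : ℕ → Set Circle1 := fun k => A0 k (c k) with hA
  have h : ∀ k, (S k : Set ℕ) ⊆ D ∧ (∀ m ∈ S k, k ≤ m ∧ 0 < m) ∧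
      MeasurableSet (A k) ∧ volume.real (A k) ≤ c k ∧
      volume.real (G (S k) (d k) (A k))ᶜ ≤ d k := fun k => h0 k (c k) (hc0 k)
  set B : ℕ → Set Circle1 := fun k => ⋃ i, A (k + 1 + i) with hB
  have hBm : ∀ k, MeasurableSet (B k) := fun k => MeasurableSet.iUnion fun i => (h _).2.2.1
  have hBv : ∀ k, volume.real (B k) ≤ d k ^ 2 / ((S k).card + 1) := by
    intro k
    have h1 := vol_iUnion (fun i => A (k + 1 + i)) (c (k + 1)) (hc0 (k + 1)).le
      (fun i => (h _).2.2.2.1.trans (hcd _ _))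
    refine h1.trans ?_
    have h2 := (hcs k).le.trans (min_le_right _ _)
    calc 2 * c (k + 1) ≤ 2 * (d k ^ 2 / (2 * ((S k).card + 1))) := by linarith
      _ = _ := by field_simp
  have hBA : ∀ j k, k < j → A j ⊆ B k := by
    intro j k hjk
    obtain ⟨i, rfl⟩ := Nat.exists_eq_add_of_le (Nat.succ_le_of_lt hjk)
    exact Set.subset_iUnion (fun i => A (k + 1 + i)) i
  set Z : ℕ → Set Circle1 := fun k => ⋃ n ∈ S k, {x | d k ≤ RiemannSum n (ind (B k)) x} with hZ
  have hZv : ∀ k, volume.real (Z k) ≤ d k := by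
    intro k
    have hdk := hd0 k
    calc volume.real (Z k) ≤ ∑ n ∈ S k, volume.real {x | d k ≤ RiemannSum n (ind (B k)) x} :=
          measureReal_biUnion_finset_le _ _
      _ ≤ ∑ n ∈ S k, d k / ((S k).card + 1) := by
          apply Finset.sum_le_sum
          intro n hn
          have h1 := (R_markov n ((h k).2.1 n hn).2 (hBm k) (d k)).trans (hBv k)
          have h2 : d k ^ 2 / ((S k).card + 1) = d k * (d k / ((S k).card + 1)) := by ring
          rw [h2] at h1
          exact le_of_mul_le_mul_left h1 hdk
      _ = d k * ((S k).card / ((S k).card + 1)) := by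
          rw [Finset.sum_const, nsmul_eq_mul]; ring
      _ ≤ d k * 1 := by
          gcongr
          rw [div_le_one (by positivity)]
          linarith
      _ = d k := mul_one _
  refine ⟨⋃ k ∈ {k : ℕ | Even k}, (A k \ B k), ?_, ?_, ?_⟩
  · exact MeasurableSet.biUnion (Set.to_countable _) fun k _ => (h k).2.2.1.diff (hBm k)
  · have h1 := vol_iUnion A (c 0) (hc0 0).le
      (fun i => (h i).2.2.2.1.trans (by simpa using hcd 0 i))
    have h2 : (⋃ k ∈ {k : ℕ | Even k}, (A k \ B k)) ⊆ ⋃ i, A i := by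
      intro x hx
      simp only [Set.mem_iUnion] at hx ⊢
      obtain ⟨k, _, hk⟩ := hx
      exact ⟨k, hk.1⟩
    have h3 : c 0 = ε / 4 := rfl
    have := (measureReal_mono (μ := (volume : Measure Circle1)) h2).trans h1
    linarith
  set E := ⋃ k ∈ {k : ℕ | Even k}, (A k \ B k) with hE
  have hsum : ∑' k, volume ((G (S k) (d k) (A k))ᶜ ∪ Z k) ≠ ⊤ := by
    have hs : HasSum (fun i : ℕ => (1 / 2 : ℝ) ^ i) 2 := hasSum_geometric_two
    refine ne_top_of_le_ne_top (b := ∑' k : ℕ, ENNReal.ofReal ((1 / 2 : ℝ) ^ k)) ?_ ?_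
    · rw [← ENNReal.ofReal_tsum_of_nonneg (fun i => by positivity) hs.summable]
      exact ENNReal.ofReal_ne_top
    · apply ENNReal.tsum_le_tsum
      intro k
      rw [← ofReal_measureReal]
      apply ENNReal.ofReal_le_ofReal
      refine (measureReal_union_le _ _).trans ?_
      have h1 := (h k).2.2.2.2
      have h2 := hZv k
      have h3 : d k + d k = (1 / 2 : ℝ) ^ k := by
        simp only [hd, pow_succ]; ring
      linarith
  filter_upwards [ae_eventually_notMem hsum] with x hx
  obtain ⟨K, hK⟩ := eventually_atTop.1 hx
  refine ⟨K, fun k hk => ?_⟩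
  have hxk := hK k hk
  rw [Set.mem_union, not_or, Set.notMem_compl_iff] at hxk
  obtain ⟨⟨n, hn, hRA⟩, hxZ⟩ := hxk
  have hRB : RiemannSum n (ind (B k)) x < d k := by
    by_contra hcon
    apply hxZ
    simp only [hZ, Set.mem_iUnion]
    exact ⟨n, hn, not_lt.1 hcon⟩
  refine ⟨n, (h k).1 hn, ((h k).2.1 n hn).1, ?_, ?_⟩
  · intro hev
    have h1 := R_mono n (f := ind (A k)) (g := fun y => ind E y + ind (B k) y) (by
      intro y
      by_cases hy : y ∈ A k
      · by_cases hyB : y ∈ B k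
        · have h2 : ind (B k) y = 1 := Set.indicator_of_mem hyB _
          have h3 : ind (A k) y = 1 := Set.indicator_of_mem hy _
          linarith [ind_nonneg E y]
        · have hyE : y ∈ E := by
            simp only [hE, Set.mem_iUnion]
            exact ⟨k, hev, hy, hyB⟩
          have h2 : ind E y = 1 := Set.indicator_of_mem hyE _
          have h3 : ind (A k) y = 1 := Set.indicator_of_mem hy _
          linarith [ind_nonneg (B k) y]
      · have h3 : ind (A k) y = 0 := Set.indicator_of_notMem hy _
        linarith [ind_nonneg (B k) y, ind_nonneg E y]) x
    rw [R_add] at h1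
    change 1 - 2 * d k ≤ _
    linarith
  · intro hev
    have hle : ∀ (X : Set Circle1) (y), ind X y ≤ 1 := fun X y =>
      Set.indicator_le_self' (fun _ _ => zero_le_one) y
    have h1 := R_mono n (f := fun y => ind E y + ind (A k) y) (g := fun y => 1 + ind (B k) y) (by
      intro y
      by_cases hy : y ∈ A k
      · by_cases hyE : y ∈ E
        · have hyB : y ∈ B k := by
            simp only [hE, Set.mem_iUnion] at hyE
            obtain ⟨j, hj, hjA, hjB⟩ := hyE
            rcases lt_trichotomy j k with hlt | heq | hgt
            · exact absurd (hBA k j hlt hy) hjB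
            · exact absurd (heq ▸ hj) hev
            · exact hBA j k hgt hjA
          have h2 : ind (B k) y = 1 := Set.indicator_of_mem hyB _
          linarith [hle E y, hle (A k) y]
        · have h3 : ind E y = 0 := Set.indicator_of_notMem hyE _
          linarith [hle (A k) y, ind_nonneg (B k) y]
      · have h3 : ind (A k) y = 0 := Set.indicator_of_notMem hy _
        linarith [ind_nonneg (B k) y, hle E y]) x
    rw [R_add, R_add, R_const n ((h k).2.1 n hn).2] at h1
    change _ ≤ 2 * d k
    linarith

lemma small (a : ℝ) (ha : 0 < a) : ∃ K : ℕ, ∀ k ≥ K, 2 * (1 / 2 : ℝ) ^ (k + 1) ≤ a := by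
  obtain ⟨K, hK⟩ := exists_pow_lt_of_lt_one ha (by norm_num : (1 / 2 : ℝ) < 1)
  refine ⟨K, fun k hk => ?_⟩
  have : (1 / 2 : ℝ) ^ k ≤ (1 / 2) ^ K := pow_le_pow_of_le_one (by norm_num) (by norm_num) hk
  rw [pow_succ]; linarith

end RSO


/-- **Rudin's theorem (strong sweeping out form).** Suppose `D ⊆ ℕ` contains, for every
`n`, a set `D_n` of `n` elements none of which divides the least common multiple of the
others. Then the Riemann sums `(R_n)_{n ∈ D}` are strong sweeping out: for every `ε > 0`
there is a set `E` with `|E| < ε`, `limsup_{n→∞, n∈D} R_n 𝟙_E = 1` a.e. and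
`liminf_{n→∞, n∈D} R_n 𝟙_E = 0` a.e. -/
theorem rudin_strong_sweeping_out
    (D : Set ℕ)
    (hD : ∀ n : ℕ, 1 ≤ n → ∃ F : Finset ℕ, (F : Set ℕ) ⊆ D ∧ F.card = n ∧
      ∀ m ∈ F, ¬ m ∣ (F.erase m).lcm id) :
    ∀ ε : ℝ, 0 < ε →
      ∃ E : Set Circle1, MeasurableSet E ∧ volume E < ENNReal.ofReal ε ∧
        (∀ᵐ x : Circle1,
          limsup (fun n => RiemannSum n (E.indicator fun _ => (1:ℝ)) x)
            (atTop ⊓ Filter.principal D) = 1) ∧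
        (∀ᵐ x : Circle1,
          liminf (fun n => RiemannSum n (E.indicator fun _ => (1:ℝ)) x)
            (atTop ⊓ Filter.principal D) = 0) := by
  intro ε hε
  obtain ⟨E, hE, hEv, hx⟩ := RSO.main D hD ε hε
  refine ⟨E, hE, ?_, ?_, ?_⟩
  · rw [← ofReal_measureReal]
    exact (ENNReal.ofReal_lt_ofReal_iff hε).2 hEv
  · filter_upwards [hx] with x hx
    obtain ⟨K, hK⟩ := hx
    apply RSO.limsup_one (fun n => RSO.R_nonneg n E x) (fun n => RSO.R_le_one n E x)
    intro a ha
    rw [frequently_inf_principal, frequently_atTop]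
    intro N
    obtain ⟨K', hK'⟩ := RSO.small (1 - a) (by linarith)
    obtain ⟨n, hnD, hkn, h1, -⟩ := hK (2 * (N + K + K')) (by omega)
    have h2 := hK' (2 * (N + K + K')) (by omega)
    have h3 := h1 (even_two_mul _)
    exact ⟨n, by omega, hnD, by linarith⟩
  · filter_upwards [hx] with x hx
    obtain ⟨K, hK⟩ := hx
    apply RSO.liminf_zero (fun n => RSO.R_nonneg n E x) (fun n => RSO.R_le_one n E x)
    intro a ha
    rw [frequently_inf_principal, frequently_atTop]
    intro N
    obtain ⟨K', hK'⟩ := RSO.small a ha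
    obtain ⟨n, hnD, hkn, -, h1⟩ := hK (2 * (N + K + K') + 1) (by omega)
    have h2 := hK' (2 * (N + K + K') + 1) (by omega)
    have h3 := h1 (by simp)
    exact ⟨n, by omega, hnD, by linarith⟩
end
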